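/- arXiv:1712.06403 — 3 statements merged into one kernel-verified Lean document; each statement's English description precedes it below -/
import Mathlib

section
/- For every even integer r ≥ 6 and every ε > 0, there exists N such that for all n ≥ N, the minimum number f_r(n) of complete r-partite r-graphs needed to partition the edge set of the complete r-uniform hypergraph on n vertices satisfies f_r(n) ≤ (14/15)^(r/6) · (1 + ε) · C(n, r/2), where C(n, k) denotes the binomial coefficient. -/
/-- A complete `r`-partite `r`-graph (a "block") on a finite vertex set `V ⊆ ℕ`:
it is determined by `r` pairwise disjoint nonempty subsets of `V`. -/
structure Block (V : Finset ℕ) (r : ℕ) where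
  parts : Fin r → Finset ℕ
  nonempty : ∀ i, (parts i).Nonempty
  subset : ∀ i, parts i ⊆ V
  disj : ∀ i j, i ≠ j → Disjoint (parts i) (parts j)

/-- The edge set of a block: all sets contained in the union of the parts
meeting each part in exactly one vertex. -/
def Block.edges {V : Finset ℕ} {r : ℕ} (B : Block V r) : Set (Finset ℕ) :=
  {X | (∀ i, (X ∩ B.parts i).card = 1) ∧ ∀ x ∈ X, ∃ i, x ∈ B.parts i}

/-- `ExactCover V r k F` : there are `k` complete `r`-partite `r`-graphs on `V`
whose edge sets are pairwise disjoint and whose union is the family `F`. -/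
def ExactCover (V : Finset ℕ) (r k : ℕ) (F : Set (Finset ℕ)) : Prop :=
  ∃ B : Fin k → Block V r,
    (∀ i j, i ≠ j → Disjoint (B i).edges (B j).edges) ∧
    (⋃ i, (B i).edges) = F

/-- `f r n` : the minimum number of complete `r`-partite `r`-graphs needed to
partition the edge set of the complete `r`-uniform hypergraph on `[n]`. -/
noncomputable def f (r n : ℕ) : ℕ :=
  sInf {k | ExactCover (Finset.range n) r k
    {X | X ⊆ Finset.range n ∧ X.card = r}}

/-!
The product of the edge sets of the complete graphs on 4 and 6 vertices splits into 14 products of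
two complete bipartite graphs, one fewer than the `3 * 5` obtained by splitting each factor alone.
The pairs in `A` are the disjoint union of about `#A / 3` edge sets of blow-ups of the complete
graph on 4 vertices, those in `B` of about `#B / 5` edge sets of blow-ups of the one on 6 vertices,
so for disjoint `A` and `B` the unions of a pair in `A` and a pair in `B` split into about
`14 / 15 * #A * #B` complete 4-partite 4-graphs.

Sorted by their second smallest element, the `a`-subsets of a `k`-set split into at most
`k ^ (a / 2)` blocks, with `a / 2` rounded down. Cut `[n]` into `m` classes of size about `n / m`
and sort the `2 * d`-sets by the sizes of their intersections with the classes. For fixed `m` only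
the profiles with even entries contribute to order `n ^ d`, and for large `m` almost all of them
have entries in `{0, 2}`; pairing up the `d` classes met then gains the factor `14 / 15` in each of
`d / 2` pairs.
-/

open Finset Function

section Transversals

variable {α β : Type*} [DecidableEq α] [DecidableEq β] {r s : ℕ}

/-- The edge set of the complete `r`-partite `r`-graph with parts `P i`. Unlike in a `Block`, a part
may be empty, and then there are no edges. -/
def transversals (P : Fin r → Finset α) : Set (Finset α) :=
  {X | (∀ i, #(X ∩ P i) = 1) ∧ ∀ x ∈ X, ∃ i, x ∈ P i}

instance (P : Fin r → Finset α) (X : Finset α) : Decidable (X ∈ transversals P) :=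
  inferInstanceAs (Decidable ((∀ i, #(X ∩ P i) = 1) ∧ ∀ x ∈ X, ∃ i, x ∈ P i))

theorem subset_of_mem_transversals {P : Fin r → Finset α} {V X : Finset α} (hP : ∀ i, P i ⊆ V)
    (hX : X ∈ transversals P) : X ⊆ V := fun x hx =>
  let ⟨i, hi⟩ := hX.2 x hx
  hP i hi

theorem nonempty_of_mem_transversals {P : Fin r → Finset α} {X : Finset α}
    (hX : X ∈ transversals P) (i : Fin r) : (P i).Nonempty :=
  (card_pos.1 (hX.1 i ▸ one_pos)).mono inter_subset_right

theorem card_of_mem_transversals {P : Fin r → Finset α} {X : Finset α}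
    (hP : Pairwise (Disjoint on P)) (hX : X ∈ transversals P) : #X = r := by
  have hunion : X = univ.biUnion fun i => X ∩ P i := by
    ext x
    simpa [← and_exists_self] using hX.2 x
  rw [hunion, card_biUnion fun i _ j _ hij => (hP hij).mono inter_subset_right inter_subset_right]
  simp [hX.1]

/-- The sets on the disjoint union of `A` and `B` that consist of a member of `F` on `A` and a
member of `G` on `B`. -/
def joinFamily (A B : Finset α) (F G : Set (Finset α)) : Set (Finset α) :=
  {X | X ⊆ A ∪ B ∧ X ∩ A ∈ F ∧ X ∩ B ∈ G}

theorem joinFamily_mono {A B : Finset α} {F F' G G' : Set (Finset α)} (hF : F ⊆ F')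
    (hG : G ⊆ G') : joinFamily A B F G ⊆ joinFamily A B F' G' :=
  fun _ hX => ⟨hX.1, hF hX.2.1, hG hX.2.2⟩

theorem joinFamily_assoc (A B C : Finset α) (F G H : Set (Finset α)) :
    joinFamily A (B ∪ C) F (joinFamily B C G H) =
      joinFamily (A ∪ B) C (joinFamily A B F G) H := by
  ext X
  have hB : X ∩ (B ∪ C) ∩ B = X ∩ B := by grind
  have hC : X ∩ (B ∪ C) ∩ C = X ∩ C := by grind
  have hA' : X ∩ (A ∪ B) ∩ A = X ∩ A := by grind
  have hB' : X ∩ (A ∪ B) ∩ B = X ∩ B := by grind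
  simp only [joinFamily, Set.mem_ofPred_eq, hA', hB, hB', hC, inter_subset_right, true_and,
    union_assoc, and_assoc]

theorem transversals_append {A B : Finset α} (hAB : Disjoint A B) {P : Fin r → Finset α}
    {Q : Fin s → Finset α} (hP : ∀ i, P i ⊆ A) (hQ : ∀ i, Q i ⊆ B) :
    transversals (Fin.append P Q) = joinFamily A B (transversals P) (transversals Q) := by
  ext X
  have hXP (i) : X ∩ A ∩ P i = X ∩ P i := by rw [inter_assoc, inter_eq_right.2 (hP i)]
  have hXQ (i) : X ∩ B ∩ Q i = X ∩ Q i := by rw [inter_assoc, inter_eq_right.2 (hQ i)]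
  have hmem (x) : (∃ i, x ∈ Fin.append P Q i) ↔ (∃ i, x ∈ P i) ∨ ∃ i, x ∈ Q i := by
    simp only [← not_iff_not (a := ∃ _, _), not_or, not_exists, Fin.forall_fin_add,
      Fin.append_left, Fin.append_right]
  have hcover : (∀ x ∈ X, (∃ i, x ∈ P i) ∨ ∃ i, x ∈ Q i) ↔
      X ⊆ A ∪ B ∧ (∀ x ∈ X ∩ A, ∃ i, x ∈ P i) ∧ ∀ x ∈ X ∩ B, ∃ i, x ∈ Q i := by
    simp only [subset_iff, mem_union, mem_inter, ← forall_and]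
    refine forall_congr' fun x => ?_
    have hPA : (∃ i, x ∈ P i) → x ∈ A := fun ⟨i, hi⟩ => hP i hi
    have hQB : (∃ i, x ∈ Q i) → x ∈ B := fun ⟨i, hi⟩ => hQ i hi
    have hAB' : x ∈ A → x ∉ B := fun h => disjoint_left.1 hAB h
    tauto
  simp only [transversals, joinFamily, Set.mem_ofPred_eq, Fin.forall_fin_add, hmem,
    Fin.append_left, Fin.append_right, hXP, hXQ, hcover]
  tauto

theorem transversals_filter_mem (P : Fin r → Finset β) (l : α → β) (V : Finset α) :
    transversals (fun i => {x ∈ V | l x ∈ P i}) =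
      {X | X ⊆ V ∧ Set.InjOn l X ∧ X.image l ∈ transversals P} := by
  ext X
  have hcard (hV : X ⊆ V) (hl : Set.InjOn l X) (i) :
      #(X.image l ∩ P i) = #(X ∩ {x ∈ V | l x ∈ P i}) := by
    rw [← card_image_of_injOn (hl.mono (by simp))]
    congr 1
    grind
  constructor
  · intro hX
    have hV : X ⊆ V := subset_of_mem_transversals (fun i => filter_subset _ _) hX
    have hl : Set.InjOn l X := by
      intro x hx y hy hxy
      obtain ⟨i, hi⟩ := hX.2 x hx
      exact card_le_one.1 (hX.1 i).le x (by grind) y (by grind)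
    exact ⟨hV, hl, fun i => (hcard hV hl i).trans (hX.1 i), by grind [transversals]⟩
  · rintro ⟨hV, hl, hX⟩
    refine ⟨fun i => (hcard hV hl i).symm.trans (hX.1 i), fun x hx => ?_⟩
    obtain ⟨i, hi⟩ := hX.2 _ (mem_image_of_mem l hx)
    exact ⟨i, mem_filter.2 ⟨hV hx, hi⟩⟩

end Transversals

/-- The family `F` of subsets of `V` is partitioned by the edge sets of at most `k` complete
`r`-partite `r`-graphs on `V`, whose parts may be empty. -/
def HasBlockPartition {α : Type*} [DecidableEq α] (V : Finset α) (r k : ℕ)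
    (F : Set (Finset α)) : Prop :=
  ∃ l ≤ k, ∃ P : Fin l → Fin r → Finset α, (∀ t i, P t i ⊆ V) ∧
    (∀ t, Pairwise (Disjoint on P t)) ∧ (∀ t, transversals (P t) ⊆ F) ∧
    ∀ X ∈ F, ∃! t, X ∈ transversals (P t)

namespace HasBlockPartition

theorem exists_exactCover {V : Finset ℕ} {r k : ℕ} {F : Set (Finset ℕ)}
    (h : HasBlockPartition V r k F) : ∃ l ≤ k, ExactCover V r l F := by
  classical
  obtain ⟨l, hk, P, hV, hP, hsub, huniq⟩ := h
  let B (t : {t // ∀ i, (P t i).Nonempty}) : Block V r :=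
    ⟨P t, t.2, hV t, fun _ _ hij => hP t hij⟩
  let e := (Fintype.equivFin {t // ∀ i, (P t i).Nonempty}).symm
  refine ⟨_, ((Fintype.card_subtype_le _).trans_eq (Fintype.card_fin l)).trans hk,
    fun i => B (e i), fun i j hij => ?_, ?_⟩
  · refine Set.disjoint_left.2 fun X hi hj => hij (e.injective (Subtype.ext ?_))
    exact (huniq X (hsub _ hi)).unique hi hj
  · refine (e.iSup_comp (g := fun t => (B t).edges)).trans (Set.Subset.antisymm ?_ fun X hX => ?_)
    · exact Set.iUnion_subset fun t => hsub t
    · obtain ⟨t, ht, -⟩ := huniq X hX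
      exact Set.mem_iUnion.2 ⟨⟨t, nonempty_of_mem_transversals ht⟩, ht⟩

section Operations

variable {α β : Type*} [DecidableEq α] [DecidableEq β] {V : Finset α} {r s k : ℕ}
  {F : Set (Finset α)}

theorem of_fintype {ι : Type*} [Fintype ι] (P : ι → Fin r → Finset α)
    (hk : Fintype.card ι ≤ k) (hV : ∀ t i, P t i ⊆ V) (hP : ∀ t, Pairwise (Disjoint on P t))
    (hsub : ∀ t, transversals (P t) ⊆ F) (huniq : ∀ X ∈ F, ∃! t, X ∈ transversals (P t)) :
    HasBlockPartition V r k F :=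
  let e := Fintype.equivFin ι
  ⟨_, hk, fun t => P (e.symm t), fun _ => hV _, fun _ => hP _, fun _ => hsub _,
    fun X hX => e.existsUnique_congr_left.1 (huniq X hX)⟩

theorem mono {V' : Finset α} {k' : ℕ} (h : HasBlockPartition V r k F) (hV : V ⊆ V')
    (hk : k ≤ k') : HasBlockPartition V' r k' F := by
  obtain ⟨l, hl, P, hPV, h⟩ := h
  exact ⟨l, hl.trans hk, P, fun t i => (hPV t i).trans hV, h⟩

theorem single {P : Fin r → Finset α} (hV : ∀ i, P i ⊆ V) (hP : Pairwise (Disjoint on P)) :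
    HasBlockPartition V r 1 (transversals P) :=
  of_fintype (fun _ : Unit => P) (by simp) (fun _ => hV) (fun _ => hP) (fun _ => subset_rfl)
    fun _ hX => ⟨(), hX, fun _ _ => rfl⟩

theorem biUnion {κ : Type*} (I : Finset κ) (c : κ → ℕ) {G : κ → Set (Finset α)}
    (hG : ∀ i ∈ I, HasBlockPartition V r (c i) (G i)) (hsub : ∀ i ∈ I, G i ⊆ F)
    (huniq : ∀ X ∈ F, ∃! i, i ∈ I ∧ X ∈ G i) : HasBlockPartition V r (∑ i ∈ I, c i) F := by
  choose l hl P hV hP hPG hPuniq using fun i : I => hG i i.2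
  refine of_fintype (ι := Σ i, Fin (l i)) (fun t => P t.1 t.2) ?_ (fun t => hV _ _)
    (fun t => hP _ _) (fun t => (hPG _ _).trans (hsub _ t.1.2)) fun X hX => ?_
  · rw [Fintype.card_sigma, ← sum_coe_sort I c]
    exact sum_le_sum fun i _ => (Fintype.card_fin _).trans_le (hl i)
  · obtain ⟨i, ⟨hi, hXi⟩, hi_uniq⟩ := huniq X hX
    obtain ⟨t, ht, ht_uniq⟩ := hPuniq ⟨i, hi⟩ X hXi
    refine ⟨⟨⟨i, hi⟩, t⟩, ht, ?_⟩
    rintro ⟨⟨j, hj⟩, u⟩ hu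
    obtain rfl : j = i := hi_uniq j ⟨hj, hPG ⟨j, hj⟩ u hu⟩
    rw [ht_uniq u hu]

theorem join {A B : Finset α} {a b : ℕ} {G : Set (Finset α)} (hAB : Disjoint A B)
    (hF : HasBlockPartition A r a F) (hG : HasBlockPartition B s b G) :
    HasBlockPartition (A ∪ B) (r + s) (a * b) (joinFamily A B F G) := by
  obtain ⟨l, ha, P, hPA, hP, hPF, hPuniq⟩ := hF
  obtain ⟨m, hb, Q, hQB, hQ, hQG, hQuniq⟩ := hG
  have hjoin (t : Fin l × Fin m) : transversals (Fin.append (P t.1) (Q t.2)) =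
      joinFamily A B (transversals (P t.1)) (transversals (Q t.2)) :=
    transversals_append hAB (hPA t.1) (hQB t.2)
  have hPQ (t : Fin l × Fin m) (i j) : Disjoint (P t.1 i) (Q t.2 j) :=
    disjoint_of_subset_left (hPA _ i) (disjoint_of_subset_right (hQB _ j) hAB)
  refine of_fintype (fun t : Fin l × Fin m => Fin.append (P t.1) (Q t.2)) ?_ (fun t => ?_)
    (fun t => ?_) (fun t => ?_) fun X hX => ?_
  · rw [Fintype.card_prod, Fintype.card_fin, Fintype.card_fin]
    exact Nat.mul_le_mul ha hb
  · simp only [Fin.forall_fin_add, Fin.append_left, Fin.append_right]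
    exact ⟨fun i => (hPA _ i).trans subset_union_left, fun i => (hQB _ i).trans subset_union_right⟩
  · simp only [Pairwise, onFun, Fin.forall_fin_add, Fin.append_left, Fin.append_right]
    exact ⟨fun i => ⟨fun j hij => hP _ (by simpa using hij), fun j _ => hPQ t i j⟩,
      fun i => ⟨fun j _ => (hPQ t j i).symm, fun j hij => hQ _ (by simpa using hij)⟩⟩
  · rw [hjoin]
    exact fun X hX => ⟨hX.1, hPF _ hX.2.1, hQG _ hX.2.2⟩
  · obtain ⟨t, ht, ht_uniq⟩ := hPuniq _ hX.2.1
    obtain ⟨u, hu, hu_uniq⟩ := hQuniq _ hX.2.2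
    simp only [hjoin]
    exact ⟨(t, u), ⟨hX.1, ht, hu⟩, fun v hv => Prod.ext (ht_uniq _ hv.2.1) (hu_uniq _ hv.2.2)⟩

theorem blowUp {W : Finset β} {G : Set (Finset β)} (h : HasBlockPartition W r k G) (l : α → β)
    (V : Finset α) :
    HasBlockPartition V r k {X | X ⊆ V ∧ Set.InjOn l X ∧ X.image l ∈ G} := by
  obtain ⟨m, hm, P, -, hP, hPG, huniq⟩ := h
  refine ⟨m, hm, fun t i => {x ∈ V | l x ∈ P t i}, fun t i => filter_subset _ _,
    fun t i j hij => disjoint_filter.2 fun x _ h => disjoint_left.1 (hP t hij) h, fun t => ?_,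
    fun X hX => ?_⟩
  · rw [transversals_filter_mem]
    exact fun X hX => ⟨hX.1, hX.2.1, hPG t hX.2.2⟩
  · obtain ⟨t, ht, ht_uniq⟩ := huniq _ hX.2.2
    simp only [transversals_filter_mem]
    exact ⟨t, ⟨hX.1, hX.2.1, ht⟩, fun u hu => ht_uniq u hu.2.2⟩

end Operations

end HasBlockPartition

section Bicliques

/-- Fourteen pairs of complete bipartite graphs on `Fin 4` and `Fin 6`, given by their sides, whose
products partition the product of the edge sets of the complete graphs. -/
def productBicliques : Fin 14 → (Fin 2 → Finset (Fin 4)) × (Fin 2 → Finset (Fin 6)) :=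
  ![(![{0, 1}, {2, 3}], ![{1}, {2, 3}]),
    (![{0, 1}, {2, 3}], ![{0}, {1, 2, 4}]),
    (![{0, 2}, {1, 3}], ![{1, 3}, {5}]),
    (![{0, 2}, {1, 3}], ![{1, 2}, {4}]),
    (![{0, 3}, {1, 2}], ![{0, 4}, {5}]),
    (![{0, 3}, {1, 2}], ![{0, 2}, {3}]),
    (![{0}, {1}], ![{0, 1, 5}, {2}]),
    (![{0}, {1}], ![{0, 3}, {1, 4}]),
    (![{2}, {3}], ![{0, 1, 5}, {2}]),
    (![{2}, {3}], ![{0, 3}, {1, 4}]),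
    (![{0}, {2}], ![{1, 2, 3}, {4, 5}]),
    (![{1}, {3}], ![{1, 2, 3}, {4, 5}]),
    (![{0}, {3}], ![{0, 2, 4}, {3, 5}]),
    (![{1}, {2}], ![{0, 2, 4}, {3, 5}])]

theorem productBicliques_disjoint (t : Fin 14) :
    Pairwise (Disjoint on (productBicliques t).1) ∧
      Pairwise (Disjoint on (productBicliques t).2) := by
  simp only [Pairwise, onFun]
  decide +revert +kernel

theorem productBicliques_existsUnique (e : Finset (Fin 4)) (e' : Finset (Fin 6)) (he : #e = 2)
    (he' : #e' = 2) :
    ∃! t, e ∈ transversals (productBicliques t).1 ∧ e' ∈ transversals (productBicliques t).2 := by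
  simp only [ExistsUnique]
  decide +revert +kernel

/-- The edges of the blow-up of a complete graph: the pairs in `A` whose elements have distinct
labels. -/
def crossingPairs {α β : Type*} (A : Finset α) (l : α → β) : Set (Finset α) :=
  {X | X ⊆ A ∧ #X = 2 ∧ Set.InjOn l X}

theorem crossingPairs_subset_powersetCard {α β : Type*} {A A' : Finset α} {l : α → β}
    (hA : A ⊆ A') : crossingPairs A l ⊆ A'.powersetCard 2 :=
  fun _ hX => mem_powersetCard.2 ⟨hX.1.trans hA, hX.2.1⟩

variable {α : Type*} [DecidableEq α] {A A' B B' : Finset α}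

theorem HasBlockPartition.crossingPairs_join (hAB : Disjoint A B) (hA' : A' ⊆ A) (hB' : B' ⊆ B)
    (l : α → Fin 4) (m : α → Fin 6) :
    HasBlockPartition (A ∪ B) 4 14
      (joinFamily A B (crossingPairs A' l) (crossingPairs B' m)) := by
  have hsub {q : ℕ} {V : Finset α} {l : α → Fin q} {P : Fin 2 → Finset (Fin q)}
      (hP : Pairwise (Disjoint on P)) :
      {X | X ⊆ V ∧ Set.InjOn l X ∧ X.image l ∈ transversals P} ⊆ crossingPairs V l :=
    fun X ⟨hV, hl, hX⟩ =>
      ⟨hV, (card_image_of_injOn hl).symm.trans (card_of_mem_transversals hP hX), hl⟩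
  have hpull (t : Fin 14) :=
    (((single (fun _ => subset_univ _) (productBicliques_disjoint t).1).blowUp l A').mono
      hA' le_rfl).join hAB
      (((single (fun _ => subset_univ _) (productBicliques_disjoint t).2).blowUp m B').mono
        hB' le_rfl)
  refine biUnion univ (fun _ => 1) (fun t _ => hpull t) (fun t _ => joinFamily_mono
    (hsub (productBicliques_disjoint t).1) (hsub (productBicliques_disjoint t).2)) ?_
  rintro X ⟨hX, ⟨hA, hA2, hlA⟩, hB, hB2, hmB⟩
  obtain ⟨t, ⟨htA, htB⟩, ht⟩ := productBicliques_existsUnique ((X ∩ A).image l)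
    ((X ∩ B).image m) ((card_image_of_injOn hlA).trans hA2) ((card_image_of_injOn hmB).trans hB2)
  exact ⟨t, ⟨mem_univ t, hX, ⟨hA, hlA, htA⟩, hB, hmB, htB⟩,
    fun u hu => ht u ⟨hu.2.2.1.2.2, hu.2.2.2.2.2⟩⟩

end Bicliques

section Rank

variable {α : Type*} [LinearOrder α] {A X : Finset α} {p : ℕ}

/-- The number of elements of `A` below `x`. -/
def rank (A : Finset α) (x : α) : ℕ := #{y ∈ A | y < x}

theorem strictMonoOn_rank (A : Finset α) : StrictMonoOn (rank A) A := fun x hx y _ hxy =>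
  card_lt_card <| (ssubset_iff_of_subset fun z => by grind).2
    ⟨x, mem_filter.2 ⟨hx, hxy⟩, by simp⟩

theorem rank_lt_card {x : α} (hx : x ∈ A) : rank A x < #A :=
  card_lt_card (filter_ssubset.2 ⟨x, hx, lt_irrefl x⟩)

theorem existsUnique_rank_eq {j : ℕ} (hj : j < #X) : ∃! x, x ∈ X ∧ rank X x = j := by
  have hrank : Set.SurjOn (rank X) X (range #X) :=
    surjOn_of_injOn_of_card_le _ (fun x hx => mem_coe.2 (mem_range.2 (rank_lt_card hx)))
      (strictMonoOn_rank X).injOn (by simp)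
  obtain ⟨x, hx, hxj⟩ := hrank (mem_coe.2 (mem_range.2 hj))
  exact ⟨x, ⟨hx, hxj⟩, fun y hy => (strictMonoOn_rank X).injOn hy.1 hx (hy.2.trans hxj.symm)⟩

/-- The vertex set of the `i`-th blow-up of the complete graph on `p + 1` vertices when the pairs in
`A` are split greedily into such blow-ups: all but the `i * p` smallest elements. -/
def chainSupport (A : Finset α) (p i : ℕ) : Finset α := {x ∈ A | i * p ≤ rank A x}

/-- The labelling of the `i`-th blow-up: the `p` smallest elements of `chainSupport A p i` get
their own labels and all the others share the last one. -/
def chainLabel (A : Finset α) (p i : ℕ) (x : α) : Fin (p + 1) :=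
  ⟨min (rank A x - i * p) p, Nat.lt_succ_of_le (min_le_right _ _)⟩

theorem pair_mem_crossingPairs_chainLabel_iff {x y : α} (hp : 0 < p) (hx : x ∈ A) (hy : y ∈ A)
    (hxy : x < y) (i : ℕ) :
    {x, y} ∈ crossingPairs (chainSupport A p i) (chainLabel A p i) ↔ i = rank A x / p := by
  have hrank := strictMonoOn_rank A hx hy hxy
  simp only [crossingPairs, chainSupport, chainLabel, Set.mem_ofPred_eq, insert_subset_iff,
    singleton_subset_iff, mem_filter, hx, hy, true_and, card_pair hxy.ne, coe_pair,
    Set.injOn_pair, hxy.ne, imp_false, Fin.mk.injEq, eq_comm (a := i),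
    Nat.div_eq_iff hp]
  omega

theorem existsUnique_mem_crossingPairs_chainLabel (hp : 0 < p) (hXA : X ⊆ A) (hX : #X = 2) :
    ∃! i, i ∈ range (#A / p + 1) ∧
      X ∈ crossingPairs (chainSupport A p i) (chainLabel A p i) := by
  obtain ⟨x, y, hxy, rfl⟩ : ∃ x y, x < y ∧ X = {x, y} := by
    obtain ⟨x, y, hxy, rfl⟩ := card_eq_two.1 hX
    rcases lt_or_gt_of_ne hxy with h | h
    exacts [⟨x, y, h, rfl⟩, ⟨y, x, h, pair_comm x y⟩]
  rw [insert_subset_iff, singleton_subset_iff] at hXA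
  simp only [pair_mem_crossingPairs_chainLabel_iff hp hXA.1 hXA.2 hxy]
  exact ⟨rank A x / p, ⟨mem_range.2 (Nat.lt_succ_of_le
    (Nat.div_le_div_right (rank_lt_card hXA.1).le)), rfl⟩, fun i hi => hi.2⟩

theorem HasBlockPartition.pairs_join {A B : Finset α} (hAB : Disjoint A B) :
    HasBlockPartition (A ∪ B) 4 (14 * ((#A / 3 + 1) * (#B / 5 + 1)))
      (joinFamily A B (A.powersetCard 2) (B.powersetCard 2)) := by
  have hsupport (V : Finset α) (p i : ℕ) : chainSupport V p i ⊆ V := filter_subset _ _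
  have key := biUnion (range (#A / 3 + 1) ×ˢ range (#B / 5 + 1)) (fun _ => 14)
    (fun t _ => crossingPairs_join hAB (hsupport A 3 t.1) (hsupport B 5 t.2)
      (chainLabel A 3 t.1) (chainLabel B 5 t.2))
    (fun t _ => joinFamily_mono (crossingPairs_subset_powersetCard (hsupport A 3 t.1))
      (crossingPairs_subset_powersetCard (hsupport B 5 t.2))) ?_
  · simpa [mul_comm] using key
  · rintro X ⟨hX, hA, hB⟩
    rw [mem_coe, mem_powersetCard] at hA hB
    obtain ⟨i, ⟨hi, hiA⟩, hi_uniq⟩ :=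
      existsUnique_mem_crossingPairs_chainLabel (p := 3) (by norm_num) hA.1 hA.2
    obtain ⟨j, ⟨hj, hjB⟩, hj_uniq⟩ :=
      existsUnique_mem_crossingPairs_chainLabel (p := 5) (by norm_num) hB.1 hB.2
    refine ⟨(i, j), ⟨mem_product.2 ⟨hi, hj⟩, hX, hiA, hjB⟩, fun t ht => ?_⟩
    obtain ⟨htI, -, htA, htB⟩ := ht
    rw [mem_product] at htI
    exact Prod.ext (hi_uniq _ ⟨htI.1, htA⟩) (hj_uniq _ ⟨htI.2, htB⟩)

end Rank

namespace HasBlockPartition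

theorem powersetCard_one {α : Type*} [DecidableEq α] (V : Finset α) :
    HasBlockPartition V 1 1 (V.powersetCard 1) := by
  convert single (V := V) (P := fun _ : Fin 1 => V) (fun _ => subset_rfl)
    Subsingleton.pairwise using 1
  ext X
  simp only [transversals, mem_coe, mem_powersetCard, Set.mem_ofPred_eq, forall_const, exists_const]
  rw [and_comm (a := #(X ∩ V) = 1)]
  exact and_congr_right fun hX => by rw [inter_eq_left.2 hX]

theorem powersetCard_zero {α : Type*} [DecidableEq α] (V : Finset α) :
    HasBlockPartition V 0 1 (V.powersetCard 0) := by
  convert single (V := V) (P := fun i : Fin 0 => i.elim0) (fun i => i.elim0)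
    Subsingleton.pairwise using 1
  ext X
  simp [transversals, eq_empty_iff_forall_notMem]

end HasBlockPartition

section PowersetCard

variable {α : Type*} [LinearOrder α]

theorem mem_joinFamily_rank_eq_one_iff {V X : Finset α} {x : α} (hx : x ∈ V) (r : ℕ) :
    X ∈ joinFamily ({y ∈ V | y < x} ∪ {x}) {y ∈ V | x < y}
      (joinFamily {y ∈ V | y < x} {x} (({y ∈ V | y < x} : Finset α).powersetCard 1)
        (({x} : Finset α).powersetCard 1)) (({y ∈ V | x < y} : Finset α).powersetCard r) ↔
      X ∈ V.powersetCard (r + 2) ∧ x ∈ X ∧ rank X x = 1 := by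
  have hV : {y ∈ V | y < x} ∪ {x} ∪ {y ∈ V | x < y} = V := by grind
  simp only [joinFamily, Set.mem_ofPred_eq, mem_coe, mem_powersetCard, hV, inter_subset_right,
    true_and, and_assoc]
  refine and_congr_right fun hXV => ?_
  have hlo : X ∩ ({y ∈ V | y < x} ∪ {x}) ∩ {y ∈ V | y < x} = {y ∈ X | y < x} := by grind
  have hmid : X ∩ ({y ∈ V | y < x} ∪ {x}) ∩ {x} = X ∩ {x} := by grind
  have hhi : X ∩ {y ∈ V | x < y} = {y ∈ X | x < y} := by grind
  have hmem : #(X ∩ {x}) = 1 ↔ x ∈ X := by by_cases hxX : x ∈ X <;> simp [hxX]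
  have hcard : #X = rank X x + #(X ∩ {x}) + #{y ∈ X | x < y} := by
    rw [rank, ← card_union_of_disjoint, ← card_union_of_disjoint]
    · congr 1
      grind
    · rw [disjoint_left]
      grind
    · rw [disjoint_left]
      grind
  rw [hlo, hmid, hhi, ← rank, hmem]
  grind

theorem HasBlockPartition.powersetCard (V : Finset α) (r : ℕ) :
    HasBlockPartition V r (#V ^ (r / 2)) (V.powersetCard r) := by
  induction r using Nat.twoStepInduction generalizing V with
  | zero => exact powersetCard_zero V
  | one => exact powersetCard_one V
  | more r ih _ =>
    have hsplit (x : α) (hx : x ∈ V) : HasBlockPartition V (r + 2) (#V ^ (r / 2))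
        {X | X ∈ V.powersetCard (r + 2) ∧ x ∈ X ∧ rank X x = 1} := by
      have hlo : Disjoint {y ∈ V | y < x} {x} := by simp
      have hhi : Disjoint ({y ∈ V | y < x} ∪ {x}) {y ∈ V | x < y} := by
        rw [disjoint_left]
        grind
      have h := ((powersetCard_one {y ∈ V | y < x}).join hlo (powersetCard_one {x})).join hhi
        (ih {y ∈ V | x < y})
      have hV : {y ∈ V | y < x} ∪ {x} ∪ {y ∈ V | x < y} = V := by grind
      convert h.mono hV.subset
        ((one_mul _).trans_le (Nat.pow_le_pow_left (card_filter_le _ _) _)) using 1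
      · ring
      · ext X
        exact (mem_joinFamily_rank_eq_one_iff hx r).symm
    rw [Nat.add_div_right _ two_pos, pow_succ', ← smul_eq_mul, ← sum_const]
    refine biUnion V _ hsplit (fun x _ X hX => hX.1) fun X hX => ?_
    have hX' := mem_powersetCard.1 (mem_coe.1 hX)
    obtain ⟨x, hx, hx_uniq⟩ := existsUnique_rank_eq (X := X) (j := 1) (by omega)
    exact ⟨x, ⟨hX'.1 hx.1, hX, hx⟩, fun y hy => hx_uniq y hy.2.2⟩

end PowersetCard

section JoinFamilies

variable {α κ : Type*} [DecidableEq α] {I : κ → Finset α}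

/-- The sets on the union of the disjoint sets `I i`, `i ∈ s`, that consist of a member of `F i` on
each `I i`: the iterated `joinFamily`. -/
def joinFamilies (s : Finset κ) (I : κ → Finset α) (F : κ → Set (Finset α)) : Set (Finset α) :=
  {X | X ⊆ s.biUnion I ∧ ∀ i ∈ s, X ∩ I i ∈ F i}

theorem joinFamilies_insert [DecidableEq κ] (i : κ) (s : Finset κ) (F : κ → Set (Finset α)) :
    joinFamilies (insert i s) I F =
      joinFamily (I i) (s.biUnion I) (F i) (joinFamilies s I F) := by
  ext X
  have hinter (j) (hj : j ∈ s) : X ∩ s.biUnion I ∩ I j = X ∩ I j := by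
    rw [inter_assoc, inter_eq_right.2 (subset_biUnion_of_mem I hj)]
  simp +contextual only [joinFamilies, joinFamily, Set.mem_ofPred_eq, biUnion_insert,
    forall_mem_insert, inter_subset_right, true_and, hinter]

theorem card_eq_sum_card_inter [Fintype κ] {X : Finset α}
    (hI : Pairwise (Disjoint on I)) (hX : X ⊆ univ.biUnion I) : #X = ∑ i, #(X ∩ I i) := by
  rw [← card_biUnion fun i _ j _ hij => (hI hij).mono inter_subset_right inter_subset_right,
    ← inter_biUnion, inter_eq_left.2 hX]

theorem joinFamilies_powersetCard_zero_or_two [Fintype κ]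
    (hI : Pairwise (Disjoint on I)) {a : κ → ℕ} (ha : ∀ i, a i = 0 ∨ a i = 2) :
    joinFamilies univ I (fun i => (I i).powersetCard (a i)) =
      joinFamilies {i | a i = 2} I fun i => (I i).powersetCard 2 := by
  ext X
  simp only [joinFamilies, Set.mem_ofPred_eq, mem_coe, mem_powersetCard, inter_subset_right,
    true_and, mem_univ, forall_const, mem_filter]
  constructor
  · rintro ⟨hX, hXa⟩
    refine ⟨fun x hx => ?_, fun i hi => (hXa i).trans hi⟩
    obtain ⟨i, -, hi⟩ := mem_biUnion.1 (hX hx)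
    have hpos : 0 < #(X ∩ I i) := card_pos.2 ⟨x, mem_inter.2 ⟨hx, hi⟩⟩
    exact mem_biUnion.2 ⟨i, by simpa using (ha i).resolve_left (by grind), hi⟩
  · rintro ⟨hX, hXa⟩
    refine ⟨hX.trans (biUnion_subset_biUnion_of_subset_left I (subset_univ _)), fun i => ?_⟩
    rcases ha i with hi | hi
    · rw [hi, card_eq_zero, ← disjoint_iff_inter_eq_empty]
      refine disjoint_of_subset_left hX ((disjoint_biUnion_left _ _ _).2 fun j hj => hI ?_)
      rintro rfl
      simp [hi] at hj
    · rw [hi, hXa i hi]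

theorem HasBlockPartition.finset_join {s : Finset κ} (hI : (s : Set κ).PairwiseDisjoint I)
    {r c : κ → ℕ} {F : κ → Set (Finset α)}
    (h : ∀ i ∈ s, HasBlockPartition (I i) (r i) (c i) (F i)) :
    HasBlockPartition (s.biUnion I) (∑ i ∈ s, r i) (∏ i ∈ s, c i) (joinFamilies s I F) := by
  classical
  induction s using Finset.induction_on with
  | empty =>
    have hempty : joinFamilies ∅ I F = (∅ : Finset α).powersetCard 0 := by
      ext X
      simp [joinFamilies]
    rw [sum_empty, prod_empty, hempty]
    exact powersetCard_zero ∅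
  | insert i s hi ih =>
    rw [coe_insert, Set.pairwiseDisjoint_insert_of_notMem (by simpa using hi)] at hI
    rw [sum_insert hi, prod_insert hi, biUnion_insert, joinFamilies_insert]
    rw [forall_mem_insert] at h
    exact h.1.join ((disjoint_biUnion_right _ _ _).2 fun j hj => hI.2 j hj) (ih hI.1 h.2)

/-- The number of blocks used for the sets that meet each of `d` classes of size at most `k` in two
points: the classes are paired up, each pair of classes costs the count of `pairs_join`, and a class
left over costs `k`. -/
def pairCount (d k : ℕ) : ℕ := (14 * ((k / 3 + 1) * (k / 5 + 1))) ^ (d / 2) * k ^ (d % 2)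

theorem HasBlockPartition.pairs_finset_join {α : Type*} [LinearOrder α]
    {I : κ → Finset α} {s : Finset κ} (hI : (s : Set κ).PairwiseDisjoint I) {k : ℕ}
    (hk : ∀ i ∈ s, #(I i) ≤ k) :
    HasBlockPartition (s.biUnion I) (2 * #s) (pairCount #s k)
      (joinFamilies s I fun i => (I i).powersetCard 2) := by
  classical
  induction hd : #s using Nat.twoStepInduction generalizing s with
  | zero =>
    obtain rfl := card_eq_zero.1 hd
    exact finset_join (r := fun _ => 2) (c := fun _ => 1) hI (by simp)
  | one =>
    obtain ⟨i, rfl⟩ := card_eq_one.1 hd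
    refine (finset_join hI fun i _ => powersetCard (I i) 2).mono subset_rfl ?_
    simpa [pairCount] using hk
  | more d ih _ =>
    obtain ⟨i, s, hi, rfl, hs⟩ := card_eq_succ.1 hd
    obtain ⟨j, t, hj, rfl, ht⟩ := card_eq_succ.1 hs
    simp only [coe_insert] at hI
    rw [Set.pairwiseDisjoint_insert_of_notMem (by simpa using hi),
      Set.pairwiseDisjoint_insert_of_notMem (by simpa using hj)] at hI
    simp only [forall_mem_insert] at hk
    have hij : Disjoint (I i) (I j) := hI.2 j (by simp)
    have hdisj : Disjoint (I i ∪ I j) (t.biUnion I) := by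
      rw [disjoint_union_left, disjoint_biUnion_right, disjoint_biUnion_right]
      exact ⟨fun l hl => hI.2 l (by simp [hl]), fun l hl => hI.1.2 l hl⟩
    have h := ((pairs_join hij).mono subset_rfl
      (k' := 14 * ((k / 3 + 1) * (k / 5 + 1))) (by gcongr; exacts [hk.1, hk.2.1])).join hdisj
      (ih hI.1.1 hk.2.2 ht)
    rw [joinFamilies_insert, joinFamilies_insert, biUnion_insert, biUnion_insert,
      joinFamily_assoc, ← union_assoc]
    convert h using 1
    · ring
    · rw [pairCount, pairCount, Nat.add_div_right _ two_pos, Nat.add_mod_right, pow_succ',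
        mul_assoc]

end JoinFamilies

theorem card_piAntidiag_nat {κ : Type*} [DecidableEq κ] (s : Finset κ) (d : ℕ) :
    #(s.piAntidiag d) = (#s).multichoose d := by
  rw [← card_finsuppAntidiag_nat_eq_multichoose, finsuppAntidiag, card_map, card_attach]

theorem card_filter_piAntidiag_univ_le_one {κ : Type*} [Fintype κ] [DecidableEq κ] (d : ℕ) :
    #{b ∈ piAntidiag (univ : Finset κ) d | ∀ i, b i ≤ 1} = (Fintype.card κ).choose d := by
  rw [← card_univ, ← card_powersetCard]
  symm
  refine card_bij (fun s _ i => if i ∈ s then 1 else 0) (fun s hs => ?_) (fun s _ t _ hst => ?_)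
    fun b hb => ?_
  · simp only [mem_filter, mem_piAntidiag, mem_univ, implies_true, and_true]
    refine ⟨?_, fun i => ?_⟩
    · rw [sum_boole, filter_mem_eq_inter, univ_inter, (mem_powersetCard.1 hs).2, Nat.cast_id]
    · split_ifs <;> simp
  · ext i
    have := congrFun hst i
    grind
  · simp only [mem_filter, mem_piAntidiag] at hb
    obtain ⟨⟨hsum, -⟩, hb1⟩ := hb
    have hb01 : (fun i => if i ∈ univ.filter fun i => b i = 1 then 1 else 0) = b := by
      ext i
      have := hb1 i
      grind
    refine ⟨univ.filter fun i => b i = 1, mem_powersetCard.2 ⟨filter_subset _ _, ?_⟩, hb01⟩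
    rw [← hsum, ← hb01]
    simp

section Profiles

variable {κ α : Type*} [Fintype κ] [LinearOrder α] {I : κ → Finset α}

/-- The number of blocks used for the `2 * d`-sets whose intersections with the classes, all of size
at most `k`, have sizes `a i`. -/
def profileCount (d k : ℕ) (a : κ → ℕ) : ℕ :=
  if ∀ i, a i = 0 ∨ a i = 2 then pairCount d k else k ^ ∑ i, a i / 2

theorem HasBlockPartition.profile (hI : Pairwise (Disjoint on I)) {k : ℕ}
    (hk : ∀ i, #(I i) ≤ k) {d : ℕ} {a : κ → ℕ} (ha : ∑ i, a i = 2 * d) :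
    HasBlockPartition (univ.biUnion I) (2 * d) (profileCount d k a)
      (joinFamilies univ I fun i => (I i).powersetCard (a i)) := by
  rw [profileCount]
  split_ifs with h02
  · have hcard : #{i | a i = 2} = d := by
      have hsum : ∑ i, a i = ∑ i, if a i = 2 then 2 else 0 :=
        sum_congr rfl fun i _ => by have := h02 i; grind
      rw [ha, ← sum_filter, sum_const, smul_eq_mul] at hsum
      omega
    rw [joinFamilies_powersetCard_zero_or_two hI h02, ← hcard]
    exact (pairs_finset_join (hI.set_pairwise _) fun i _ => hk i).mono
      (biUnion_subset_biUnion_of_subset_left I (subset_univ _)) le_rfl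
  · rw [← ha, ← prod_pow_eq_pow_sum]
    exact (finset_join (hI.set_pairwise _) fun i _ => powersetCard (I i) (a i)).mono subset_rfl
      (prod_le_prod' fun i _ => Nat.pow_le_pow_left (hk i) _)

section Count

variable [DecidableEq κ]

/-- The number of blocks used for the `2 * d`-subsets of a union of `m` classes of size at most `k`.
The three terms account for the profiles with values in `{0, 2}`, for the other even profiles and
for the profiles with an odd value. -/
def blockCount (m d k : ℕ) : ℕ :=
  m.choose d * pairCount d k + (m.multichoose d - m.choose d) * k ^ d +
    m.multichoose (2 * d) * k ^ (d - 1)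

theorem sum_profileCount_even (d k : ℕ) :
    ∑ a ∈ piAntidiag (univ : Finset κ) (2 * d) with ∀ i, 2 ∣ a i, profileCount d k a =
      (Fintype.card κ).choose d * pairCount d k +
        ((Fintype.card κ).multichoose d - (Fintype.card κ).choose d) * k ^ d := by
  have hcount (b) (hb : b ∈ piAntidiag (univ : Finset κ) d) :
      profileCount d k (2 • b) = if ∀ i, b i ≤ 1 then pairCount d k else k ^ d := by
    have hiff (i) : b i = 0 ∨ b i = 1 ↔ b i ≤ 1 := by omega
    simp [profileCount, hiff, (mem_piAntidiag.1 hb).1]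
  rw [← map_nsmul_piAntidiag_univ d two_ne_zero, sum_map]
  simp only [Embedding.coeFn_mk]
  rw [sum_congr rfl hcount, sum_ite, sum_const, sum_const, smul_eq_mul, smul_eq_mul, filter_not,
    card_sdiff_of_subset (filter_subset _ _), card_filter_piAntidiag_univ_le_one,
    card_piAntidiag_nat, card_univ]

theorem sum_profileCount_odd_le (d : ℕ) {k : ℕ} (hk : 0 < k) :
    ∑ a ∈ piAntidiag (univ : Finset κ) (2 * d) with ¬∀ i, 2 ∣ a i, profileCount d k a ≤
      (Fintype.card κ).multichoose (2 * d) * k ^ (d - 1) := by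
  rw [← card_univ, ← card_piAntidiag_nat]
  refine (sum_le_card_nsmul _ _ (k ^ (d - 1)) fun a ha => ?_).trans
    (Nat.mul_le_mul_right _ (card_filter_le _ _))
  simp only [mem_filter, mem_piAntidiag, not_forall] at ha
  obtain ⟨⟨hsum, -⟩, j, hj⟩ := ha
  have hlt : ∑ i, 2 * (a i / 2) < ∑ i, a i :=
    sum_lt_sum (fun i _ => Nat.mul_div_le _ _) ⟨j, mem_univ j, by omega⟩
  rw [← mul_sum, hsum] at hlt
  rw [profileCount, if_neg fun h => hj (by have := h j; omega)]
  exact Nat.pow_le_pow_right hk (by omega)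

theorem sum_profileCount_le (d : ℕ) {k : ℕ} (hk : 0 < k) :
    ∑ a ∈ piAntidiag (univ : Finset κ) (2 * d), profileCount d k a ≤
      blockCount (Fintype.card κ) d k := by
  rw [← sum_filter_add_sum_filter_not _ fun a => ∀ i, 2 ∣ a i, sum_profileCount_even]
  exact Nat.add_le_add_left (sum_profileCount_odd_le d hk) _

end Count

theorem HasBlockPartition.powersetCard_biUnion (hI : Pairwise (Disjoint on I)) {k : ℕ}
    (hk0 : 0 < k) (hk : ∀ i, #(I i) ≤ k) (d : ℕ) :
    HasBlockPartition (univ.biUnion I) (2 * d) (blockCount (Fintype.card κ) d k)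
      ((univ.biUnion I).powersetCard (2 * d)) := by
  classical
  refine (biUnion (piAntidiag univ (2 * d)) (profileCount d k)
    (fun a ha => profile hI hk (mem_piAntidiag.1 ha).1) (fun a ha X hX => ?_)
    fun X hX => ?_).mono subset_rfl (sum_profileCount_le d hk0)
  · refine mem_powersetCard.2 ⟨hX.1, ?_⟩
    rw [card_eq_sum_card_inter hI hX.1, ← (mem_piAntidiag.1 ha).1]
    exact sum_congr rfl fun i hi => (mem_powersetCard.1 (hX.2 i hi)).2
  · rw [mem_coe, mem_powersetCard] at hX
    refine ⟨fun i => #(X ∩ I i), ⟨?_, hX.1, fun i _ => ?_⟩, fun a ha => ?_⟩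
    · rw [mem_piAntidiag, ← card_eq_sum_card_inter hI hX.1]
      exact ⟨hX.2, fun i _ => mem_univ i⟩
    · exact mem_powersetCard.2 ⟨inter_subset_right, rfl⟩
    · exact funext fun i => ((mem_powersetCard.1 (ha.2.2 i (mem_univ i))).2).symm

end Profiles

theorem f_two_mul_le_blockCount {m : ℕ} (hm : 0 < m) (d n : ℕ) :
    f (2 * d) n ≤ blockCount m d (n / m + 1) := by
  set k := n / m + 1
  have hk0 : 0 < k := Nat.succ_pos _
  let I (i : Fin m) : Finset ℕ := {x ∈ range n | x / k = i}
  have hI : Pairwise (Disjoint on I) := fun i j hij =>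
    disjoint_filter.2 fun x _ hi hj => hij (Fin.ext (hi.symm.trans hj))
  have hunion : univ.biUnion I = range n := by
    ext x
    have hlt (hx : x < n) : x / k < m :=
      (Nat.div_lt_iff_lt_mul hk0).2 (hx.trans (Nat.lt_mul_div_succ n hm))
    simp only [I, mem_biUnion, mem_univ, true_and, mem_filter, mem_range, exists_and_left]
    exact ⟨And.left, fun hx => ⟨hx, ⟨x / k, hlt hx⟩, rfl⟩⟩
  have hcard (i) : #(I i) ≤ k := by
    have hsub : I i ⊆ Ico (i * k) (i * k + k) := fun x hx => by
      have hxi := (Nat.div_eq_iff hk0).1 (mem_filter.1 hx).2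
      rw [mem_Ico]
      omega
    simpa using card_le_card hsub
  have hfamily : ((range n).powersetCard (2 * d) : Set (Finset ℕ)) =
      {X | X ⊆ range n ∧ #X = 2 * d} := Set.ext fun X => mem_powersetCard
  obtain ⟨l, hl, hcover⟩ :=
    (HasBlockPartition.powersetCard_biUnion hI hk0 hcard d).exists_exactCover
  rw [Fintype.card_fin] at hl
  rw [hunion, hfamily] at hcover
  exact (Nat.sInf_le hcover).trans hl

section Asymptotics

open Filter Topology

theorem tendsto_natCast_div_add_one_div (q : ℕ) :
    Tendsto (fun n : ℕ => ((n / q + 1 : ℕ) : ℝ) / n) atTop (𝓝 (1 / q)) := by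
  have hfloor : Tendsto (fun n : ℕ => ((n / q : ℕ) : ℝ) / n) atTop (𝓝 (1 / q)) := by
    refine ((tendsto_nat_floor_mul_div_atTop (R := ℝ) (a := 1 / q) (by positivity)).comp
      tendsto_natCast_atTop_atTop).congr fun n => ?_
    rw [comp_apply, one_div_mul_eq_div, Nat.floor_div_eq_div]
  simpa [add_div] using hfloor.add (tendsto_const_div_atTop_nhds_zero_nat (1 : ℝ))

theorem tendsto_choose_div_pow (d : ℕ) :
    Tendsto (fun n : ℕ => (n.choose d : ℝ) / n ^ d) atTop (𝓝 (1 / d.factorial)) := by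
  have h := (Asymptotics.isEquivalent_iff_tendsto_one ?_).1 (isEquivalent_choose d)
  · refine (h.div_const (d.factorial : ℝ)).congr fun n => ?_
    simp only [Pi.div_apply]
    field_simp
  · filter_upwards [eventually_gt_atTop 0] with n hn
    positivity

theorem tendsto_multichoose_div_pow (d : ℕ) :
    Tendsto (fun n : ℕ => (n.multichoose d : ℝ) / n ^ d) atTop (𝓝 (1 / d.factorial)) := by
  have hratio : Tendsto (fun n : ℕ => ((n + d - 1 : ℕ) : ℝ) / n) atTop (𝓝 1) := by
    have h := (tendsto_const_div_atTop_nhds_zero_nat ((d : ℝ) - 1)).const_add 1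
    rw [add_zero] at h
    refine h.congr' ?_
    filter_upwards [eventually_gt_atTop 0] with n hn
    rw [Nat.cast_sub (by omega)]
    push_cast
    field_simp
    ring
  have hshift : Tendsto (fun n : ℕ => n + d - 1) atTop atTop :=
    tendsto_atTop_mono (fun n => by omega) (tendsto_sub_atTop_nat 1)
  have h := ((tendsto_choose_div_pow d).comp hshift).mul (hratio.pow d)
  rw [one_pow, mul_one] at h
  refine h.congr' ?_
  filter_upwards [eventually_gt_atTop 1] with n hn
  have hpos : (0 : ℝ) < (n + d - 1 : ℕ) := by exact_mod_cast (by omega : 0 < n + d - 1)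
  rw [comp_apply, Nat.multichoose_eq, div_pow]
  field_simp

theorem tendsto_pairCount_div_pow (d : ℕ) :
    Tendsto (fun k : ℕ => (pairCount d k : ℝ) / k ^ d) atTop (𝓝 ((14 / 15) ^ (d / 2))) := by
  have h := ((((tendsto_natCast_div_add_one_div 3).mul
    (tendsto_natCast_div_add_one_div 5)).const_mul 14).pow (d / 2))
  norm_num only at h
  refine h.congr' ?_
  filter_upwards [eventually_gt_atTop 0] with k hk
  have hpow : (k : ℝ) ^ d = (k ^ 2) ^ (d / 2) * k ^ (d % 2) := by
    rw [← pow_mul, ← pow_add, Nat.div_add_mod]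
  have hk' : (k : ℝ) ^ (d % 2) ≠ 0 := by positivity
  rw [pairCount, hpow]
  push_cast
  rw [mul_div_mul_right _ _ hk', ← div_pow]
  congr 1
  field_simp

theorem tendsto_blockCount_div_pow (m : ℕ) {d : ℕ} (hd : 0 < d) :
    Tendsto (fun k : ℕ => (blockCount m d k : ℝ) / k ^ d) atTop
      (𝓝 (m.choose d * (14 / 15) ^ (d / 2) + (m.multichoose d - m.choose d : ℕ))) := by
  have h := (((tendsto_pairCount_div_pow d).const_mul (m.choose d : ℝ)).add_const
    ((m.multichoose d - m.choose d : ℕ) : ℝ)).add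
    (tendsto_const_div_atTop_nhds_zero_nat (m.multichoose (2 * d) : ℝ))
  rw [add_zero] at h
  refine h.congr' ?_
  filter_upwards [eventually_gt_atTop 0] with k hk
  obtain ⟨e, rfl⟩ := Nat.exists_eq_add_one.2 hd
  rw [blockCount, Nat.add_sub_cancel]
  push_cast
  field_simp
  ring

theorem tendsto_blockCount_comp_div_pow {m d : ℕ} (hm : 0 < m) (hd : 0 < d) :
    Tendsto (fun n : ℕ => (blockCount m d (n / m + 1) : ℝ) / n ^ d) atTop
      (𝓝 ((m.choose d * (14 / 15) ^ (d / 2) + (m.multichoose d - m.choose d : ℕ)) / m ^ d)) := by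
  have hk : Tendsto (fun n : ℕ => n / m + 1) atTop atTop :=
    (tendsto_add_atTop_nat 1).comp (Nat.tendsto_div_const_atTop hm.ne')
  have h := ((tendsto_blockCount_div_pow m hd).comp hk).mul
    ((tendsto_natCast_div_add_one_div m).pow d)
  rw [one_div, inv_pow, ← div_eq_mul_inv] at h
  refine h.congr fun n => ?_
  rw [comp_apply, div_pow]
  field_simp

theorem tendsto_blockCount_leadingCoeff (d : ℕ) :
    Tendsto (fun m : ℕ =>
      (m.choose d * (14 / 15) ^ (d / 2) + (m.multichoose d - m.choose d : ℕ) : ℝ) / m ^ d) atTop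
      (𝓝 ((14 / 15) ^ (d / 2) / d.factorial)) := by
  have h := ((tendsto_choose_div_pow d).mul_const ((14 / 15 : ℝ) ^ (d / 2))).add
    ((tendsto_multichoose_div_pow d).sub (tendsto_choose_div_pow d))
  rw [sub_self, add_zero, one_div_mul_eq_div] at h
  refine h.congr fun m => ?_
  have hle : m.choose d ≤ m.multichoose d := by
    rcases d with _ | d
    · simp
    · rw [Nat.multichoose_eq]
      exact Nat.choose_le_choose _ (by omega)
  rw [Nat.cast_sub hle]
  ring

theorem eventually_f_two_mul_le {d : ℕ} (hd : 0 < d) {ε : ℝ} (hε : 0 < ε) :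
    ∀ᶠ n : ℕ in atTop, (f (2 * d) n : ℝ) ≤ (14 / 15) ^ (d / 2) * (1 + ε) * n.choose d := by
  have hlt : ((14 / 15) ^ (d / 2) / d.factorial : ℝ) <
      (14 / 15) ^ (d / 2) * (1 + ε) * (1 / d.factorial) := by
    rw [mul_one_div]
    gcongr
    exact lt_mul_of_one_lt_right (by positivity) (by linarith)
  obtain ⟨m, hm, hm0⟩ := (((tendsto_blockCount_leadingCoeff d).eventually_lt_const hlt).and
    (eventually_gt_atTop 0)).exists
  filter_upwards [(tendsto_blockCount_comp_div_pow hm0 hd).eventually_lt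
    ((tendsto_choose_div_pow d).const_mul _) hm, eventually_gt_atTop 0] with n hn hn0
  rw [← mul_div_assoc, div_lt_div_iff_of_pos_right (by positivity)] at hn
  exact (Nat.cast_le.2 (f_two_mul_le_blockCount hm0 d n)).trans hn.le

end Asymptotics

theorem pow_div_four_le_rpow_div_six {x : ℝ} (hx0 : 0 < x) (hx1 : x ≤ 1) {r : ℕ} (hr : 4 ≤ r)
    (hre : Even r) : x ^ (r / 4) ≤ x ^ ((r : ℝ) / 6) := by
  rw [← Real.rpow_natCast]
  refine Real.rpow_le_rpow_of_exponent_ge hx0 hx1 ((div_le_iff₀ (by norm_num)).2 ?_)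
  obtain ⟨d, rfl⟩ := hre
  exact_mod_cast (by omega : d + d ≤ (d + d) / 4 * 6)

theorem graham_pollak_even_upper_bound_general (r : ℕ) (hr : 0 < r) (hre : Even r) (ε : ℝ)
    (hε : 0 < ε) :
    ∃ N : ℕ, ∀ n : ℕ, N ≤ n →
      (f r n : ℝ) ≤ ((14 : ℝ) / 15) ^ (r / 4) * (1 + ε) * (n.choose (r / 2)) := by
  obtain ⟨d, rfl⟩ := even_iff_exists_two_mul.1 hre
  obtain ⟨N, hN⟩ := Filter.eventually_atTop.1 (eventually_f_two_mul_le (by omega : 0 < d) hε)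
  have hdiv : 2 * d / 4 = d / 2 := by omega
  refine ⟨N, fun n hn => ?_⟩
  rw [hdiv, Nat.mul_div_cancel_left d two_pos]
  exact hN n hn

theorem graham_pollak_even_upper_bound
    (r : ℕ) (hr : 6 ≤ r) (hre : Even r) (ε : ℝ) (hε : 0 < ε) :
    ∃ N : ℕ, ∀ n : ℕ, N ≤ n →
      (f r n : ℝ) ≤ ((14 : ℝ) / 15) ^ ((r : ℝ) / 6) * (1 + ε) * (n.choose (r / 2)) := by
  obtain ⟨N, hN⟩ := graham_pollak_even_upper_bound_general r (by omega) hre ε hε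
  refine ⟨N, fun n hn => (hN n hn).trans ?_⟩
  gcongr
  exact pow_div_four_le_rpow_div_six (by norm_num) (by norm_num) (by omega) hre
end

section
/- For every even integer m ≥ 8 and every integer n ≥ m, the quantity f_m(n) satisfies f_m(n) ≤ (14/15)^(m/6) · n^(m/2) / (m/2)! + n^(m/2 − 1) · log₂ n. -/
/-!
Decompositions into blocks are written as identities of polynomials: a block is a product of `r`
sums of variables, and the complete `r`-graph is the `r`-th elementary symmetric function `e_r`. The
cost of `e_r` is the number of such products needed when the variables are replaced by arbitrary
sums of variables.

Splitting the variables into two parts, `e_r` becomes `∑ e_i(S) e_{r-i}(T)`. The odd-odd terms have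
lower order, so for `r = 2 * d` the costs are bounded as if the answer were `n ^ d / d !`; the gain
comes from `e_2(S) e_2(T)`, for which multiplying the biclique decompositions of the two complete
graphs costs about `|S| |T|`. For `|S| = 4` and `|T| = 16` this would be `3 * 15 = 45`, but `42`
products suffice: the complete graph on `T` is a union of a matching `N` and three graphs `G_t` such
that each `G_t` needs six bicliques and each `G_t + N` only four, and each of the three perfect
matchings of the complete graph on `S` is complementary to a biclique, so that
`3 * (6 + 2 * 4) = 42`. Merging vertices extends the saving of `14 / 15` to all `S` and `T`.

With `γ ^ 3 = 14 / 15`, halving the set repeatedly then gives the leading term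
`γ ^ d * n ^ d / d !`. This is consistent because all products of leading terms have the coefficient
`γ ^ d` apart from those with a factor of degree `1` or `2`, whose coefficients `1` and `γ ^ 3` are
respectively too large and small enough to compensate. The lower-order terms accumulate once per
halving, which produces the logarithm.
-/

open scoped Pointwise
open Finset.HasAntidiagonal (antidiagonal mem_antidiagonal)

/-- `IsSumOfProducts M r k p`: the element `p` is a sum of at most `k` products, each of `r`
elements of `M`; the set of these products is the pointwise power `(M : Set R) ^ r`. If the
elements of `M` are sums of variables, this is a decomposition of `p` into `k` complete `r`-partite
`r`-graphs. -/
def IsSumOfProducts {R : Type*} [CommSemiring R] (M : AddSubmonoid R) (r k : ℕ) (p : R) : Prop :=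
  ∃ P : Multiset R, P.card ≤ k ∧ (∀ q ∈ P, q ∈ (M : Set R) ^ r) ∧ P.sum = p

section SumsOfProducts

variable {R : Type*} [CommSemiring R] {M : AddSubmonoid R}

namespace IsSumOfProducts

variable {r s k l : ℕ} {p q : R}

theorem mono (hp : IsSumOfProducts M r k p) (hkl : k ≤ l) : IsSumOfProducts M r l p :=
  hp.imp fun _ ⟨hcard, hP⟩ => ⟨hcard.trans hkl, hP⟩

theorem zero (r k : ℕ) : IsSumOfProducts M r k 0 := ⟨0, by simp⟩

theorem of_mem_pow (hp : p ∈ (M : Set R) ^ r) : IsSumOfProducts M r 1 p := ⟨{p}, by simpa using hp⟩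

theorem one : IsSumOfProducts M 0 1 1 := of_mem_pow (by simp)

theorem of_mem (hp : p ∈ M) : IsSumOfProducts M 1 1 p := of_mem_pow (by simpa using hp)

theorem add (hp : IsSumOfProducts M r k p) (hq : IsSumOfProducts M r l q) :
    IsSumOfProducts M r (k + l) (p + q) := by
  obtain ⟨P, hPcard, hP, rfl⟩ := hp
  obtain ⟨Q, hQcard, hQ, rfl⟩ := hq
  refine ⟨P + Q, ?_, fun a ha => ?_, Multiset.sum_add P Q⟩
  · simpa using Nat.add_le_add hPcard hQcard
  · exact (Multiset.mem_add.1 ha).elim (hP a) (hQ a)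

theorem sum {ι : Type*} (t : Finset ι) {k : ι → ℕ} {p : ι → R}
    (hp : ∀ i ∈ t, IsSumOfProducts M r (k i) (p i)) :
    IsSumOfProducts M r (∑ i ∈ t, k i) (∑ i ∈ t, p i) := by
  classical
  induction t using Finset.induction_on with
  | empty => exact zero r _
  | insert i t hi ih =>
    rw [Finset.sum_insert hi, Finset.sum_insert hi]
    exact (hp i (t.mem_insert_self i)).add (ih fun j hj => hp j (Finset.mem_insert_of_mem hj))

theorem mul (hp : IsSumOfProducts M r k p) (hq : IsSumOfProducts M s l q) :
    IsSumOfProducts M (r + s) (k * l) (p * q) := by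
  obtain ⟨P, hPcard, hP, rfl⟩ := hp
  obtain ⟨Q, hQcard, hQ, rfl⟩ := hq
  refine ⟨P.bind fun a => Q.map (a * ·), ?_, fun c hc => ?_, ?_⟩
  · simpa [Multiset.card_bind] using Nat.mul_le_mul hPcard hQcard
  · obtain ⟨a, ha, hc⟩ := Multiset.mem_bind.1 hc
    obtain ⟨b, hb, rfl⟩ := Multiset.mem_map.1 hc
    rw [pow_add]
    exact Set.mul_mem_mul (hP a ha) (hQ b hb)
  · have distrib (a : R) : (Q.map (a * ·)).sum = a * Q.sum := by
      rw [Multiset.sum_map_mul_left, Multiset.map_id']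
    rw [Multiset.sum_bind]
    simp only [distrib, Multiset.sum_map_mul_right, Multiset.map_id']

theorem mul_of_mem (hp : p ∈ M) (hq : q ∈ M) : IsSumOfProducts M 2 1 (p * q) :=
  (of_mem hp).mul (of_mem hq)

end IsSumOfProducts

theorem esymm_zero (s : Multiset R) : s.esymm 0 = 1 := by
  simp [Multiset.esymm]

theorem esymm_cons_succ (a : R) (s : Multiset R) (r : ℕ) :
    (a ::ₘ s).esymm (r + 1) = s.esymm (r + 1) + a * s.esymm r := by
  simp [Multiset.esymm, Multiset.powersetCard_cons, Multiset.sum_map_mul_left]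

theorem esymm_one (s : Multiset R) : s.esymm 1 = s.sum := by
  simp [Multiset.esymm, Multiset.powersetCard_one]

theorem esymm_eq_zero_of_card_lt {s : Multiset R} {r : ℕ} (h : s.card < r) : s.esymm r = 0 := by
  simp [Multiset.esymm, Multiset.powersetCard_eq_empty r h]

theorem esymm_zero_succ (r : ℕ) : (0 : Multiset R).esymm (r + 1) = 0 :=
  esymm_eq_zero_of_card_lt (by simp)

theorem esymm_add (s t : Multiset R) (r : ℕ) :
    (s + t).esymm r = ∑ p ∈ antidiagonal r, s.esymm p.1 * t.esymm p.2 := by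
  induction s using Multiset.induction generalizing r with
  | empty =>
    cases r with
    | zero => simp [esymm_zero]
    | succ r => simp [Finset.Nat.sum_antidiagonal_succ, esymm_zero, esymm_zero_succ]
  | cons a s ih =>
    cases r with
    | zero => simp [esymm_zero]
    | succ r =>
      rw [Multiset.cons_add, esymm_cons_succ, ih, ih, Finset.Nat.sum_antidiagonal_succ,
        Finset.Nat.sum_antidiagonal_succ]
      simp only [esymm_cons_succ, esymm_zero, add_mul, Finset.sum_add_distrib, Finset.mul_sum,
        mul_assoc, add_assoc]

theorem esymm_cons_cons_add_two (a b : R) (s : Multiset R) (r : ℕ) :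
    (a ::ₘ b ::ₘ s).esymm (r + 2) = ((a + b) ::ₘ s).esymm (r + 2) + a * b * s.esymm r := by
  simp only [esymm_cons_succ]
  ring

theorem esymm_two_add (s t : Multiset R) :
    (s + t).esymm 2 = (s.sum ::ₘ t).esymm 2 + s.esymm 2 := by
  simp only [esymm_add, esymm_cons_succ, Finset.Nat.sum_antidiagonal_succ, esymm_zero, esymm_one,
    zero_add, Finset.HasAntidiagonal.antidiagonal_zero, Finset.sum_singleton]
  ring

theorem exists_add_eq_of_card_eq_add {α : Type*} {s : Multiset α} {x y : ℕ}
    (hs : s.card = x + y) : ∃ t u : Multiset α, t + u = s ∧ t.card = x ∧ u.card = y := by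
  obtain ⟨l, rfl⟩ := Quotient.exists_rep s
  have hl : l.length = x + y := hs
  refine ⟨l.take x, l.drop x, ?_, by simp [hl], by simp [hl]⟩
  rw [Multiset.coe_add, List.take_append_drop]
  rfl

/-- Replacing `a` and `b` by `a + b` loses only the terms divisible by `a * b`. -/
theorem isSumOfProducts_esymm_choose (r : ℕ) (s : Multiset R) (hs : ∀ a ∈ s, a ∈ M) :
    IsSumOfProducts M r (s.card.choose (r / 2)) (s.esymm r) := by
  induction r using Nat.twoStepInduction generalizing s with
  | zero => simpa [esymm_zero] using IsSumOfProducts.one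
  | one => simpa [esymm_one] using IsSumOfProducts.of_mem (M.multiset_sum_mem s hs)
  | more r ih _ =>
    induction hn : s.card using Nat.strong_induction_on generalizing s with
    | _ n ihn =>
      rcases Nat.lt_or_ge n 2 with hn2 | hn2
      · rw [esymm_eq_zero_of_card_lt (by omega)]
        exact IsSumOfProducts.zero _ _
      · obtain ⟨n, rfl⟩ := Nat.exists_eq_add_of_le' hn2
        obtain ⟨a, s', rfl, hs'⟩ := Multiset.card_eq_succ_iff.1 hn
        obtain ⟨b, t, rfl, rfl⟩ := Multiset.card_eq_succ_iff.1 hs'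
        simp only [Multiset.forall_mem_cons] at hs
        obtain ⟨ha, hb, ht⟩ := hs
        have merged := ihn _ (by simp) ((a + b) ::ₘ t)
          (Multiset.forall_mem_cons.2 ⟨M.add_mem ha hb, ht⟩) (Multiset.card_cons _ _)
        have removed := (IsSumOfProducts.mul_of_mem ha hb).mul (ih t ht)
        rw [add_comm 2 r] at removed
        rw [esymm_cons_cons_add_two]
        refine (merged.add removed).mono ?_
        rw [show (r + 2) / 2 = r / 2 + 1 by omega, Nat.choose_succ_succ' (t.card + 1), one_mul,
          add_comm]
        gcongr
        omega

theorem IsSumOfProducts.mul_esymm_two_of_blocks {q : R} {r c K : ℕ} {g : ℕ → ℕ} (hc : 0 < c)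
    (hsmall : ∀ s : Multiset R, s.card ≤ c → (∀ a ∈ s, a ∈ M) →
      IsSumOfProducts M r (g s.card) (q * s.esymm 2))
    (hblock : ∀ s : Multiset R, s.card = c + 1 → (∀ a ∈ s, a ∈ M) →
      IsSumOfProducts M r K (q * s.esymm 2))
    (hg : ∀ n, g (n + 1) + K ≤ g (n + 1 + c)) (s : Multiset R) (hs : ∀ a ∈ s, a ∈ M) :
    IsSumOfProducts M r (g s.card) (q * s.esymm 2) := by
  induction hn : s.card using Nat.strong_induction_on generalizing s with
  | _ n ih =>
    subst hn
    rcases Nat.lt_or_ge c s.card with hcs | hcs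
    · obtain ⟨u, t, rfl, hu, ht⟩ := exists_add_eq_of_card_eq_add
        (show s.card = (c + 1) + (s.card - (c + 1)) by omega)
      have hus : ∀ a ∈ u, a ∈ M := fun a ha => hs a (Multiset.mem_add.2 (.inl ha))
      have hts : ∀ a ∈ t, a ∈ M := fun a ha => hs a (Multiset.mem_add.2 (.inr ha))
      have hcard : (u + t).card = t.card + 1 + c := by rw [Multiset.card_add, hu]; ring
      have rest := ih (t.card + 1) (by omega) (u.sum ::ₘ t)
        (Multiset.forall_mem_cons.2 ⟨M.multiset_sum_mem u hus, hts⟩) (Multiset.card_cons _ _)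
      rw [esymm_two_add, mul_add, hcard]
      exact (rest.add (hblock u hu hus)).mono (hg t.card)
    · exact hsmall s hcs hs

theorem isSumOfProducts_esymm_two (s : Multiset R) (hs : ∀ a ∈ s, a ∈ M) :
    IsSumOfProducts M 2 (s.card - 1) (s.esymm 2) := by
  rw [← one_mul (s.esymm 2)]
  refine IsSumOfProducts.mul_esymm_two_of_blocks (c := 1) (K := 1) (g := (· - 1)) one_pos
    (fun s hcard _ => ?_) (fun s hcard hs => ?_) (fun n => ?_) s hs
  · rw [esymm_eq_zero_of_card_lt (by omega), mul_zero]
    exact IsSumOfProducts.zero _ _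
  · obtain ⟨a, b, rfl⟩ := Multiset.card_eq_two.1 hcard
    rw [one_mul, Multiset.insert_eq_cons, Multiset.esymm_pair_two]
    exact IsSumOfProducts.mul_of_mem (hs a (by simp)) (hs b (by simp))
  · omega

end SumsOfProducts

section BicliquesOnSixteenVertices

variable {R : Type*} [CommSemiring R] {M : AddSubmonoid R}

/-- The permutation of order three of the sixteen vertices used to move the bicliques around; it
fixes the vertex `15` and permutes `3 * i`, `3 * i + 1` and `3 * i + 2` cyclically for `i < 5`. -/
def rotate : Fin 16 → Fin 16 :=
  ![1, 2, 0, 4, 5, 3, 7, 8, 6, 10, 11, 9, 13, 14, 12, 15]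

/-- Four edge-disjoint bicliques on `Fin 16`, as a quadratic form in the weights of the vertices. -/
def fourBicliques (b : Fin 16 → R) : R :=
  (b 0 + b 1 + b 4 + b 5 + b 6 + b 8 + b 11 + b 12) * (b 10 + b 14)
    + b 8 * (b 1 + b 2 + b 4 + b 5 + b 6 + b 9 + b 11 + b 15)
    + (b 0 + b 4 + b 7 + b 12 + b 15) * (b 2 + b 11)
    + (b 0 + b 1 + b 5 + b 6 + b 15) * (b 4 + b 13)

/-- Six edge-disjoint bicliques on `Fin 16`, as a quadratic form in the weights of the vertices.
They cover the edges of `fourBicliques` apart from those of `commonMatching`. -/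
def sixBicliques (b : Fin 16 → R) : R :=
  (b 0 + b 4 + b 5 + b 6 + b 8 + b 12) * b 14 + b 10 * (b 1 + b 4 + b 5 + b 12)
    + (b 4 + b 8 + b 13) * (b 1 + b 5 + b 6 + b 15) + (b 0 + b 8) * (b 4 + b 10)
    + b 2 * (b 0 + b 4 + b 7 + b 8 + b 15)
    + (b 0 + b 4 + b 8 + b 10 + b 12 + b 14 + b 15) * b 11

/-- A matching on `Fin 16` that is invariant under `rotate`, as a quadratic form in the weights of
the vertices. -/
def commonMatching (b : Fin 16 → R) : R :=
  b 0 * b 13 + b 1 * b 14 + b 2 * b 12 + b 6 * b 10 + b 7 * b 11 + b 8 * b 9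

theorem sixBicliques_add_commonMatching (b : Fin 16 → R) :
    sixBicliques b + commonMatching b = fourBicliques b := by
  simp only [fourBicliques, sixBicliques, commonMatching]
  ring

theorem commonMatching_comp_rotate (b : Fin 16 → R) :
    commonMatching (b ∘ rotate) = commonMatching b := by
  change b 1 * b 14 + b 2 * b 12 + b 0 * b 13 + b 7 * b 11 + b 8 * b 9 + b 6 * b 10 =
    commonMatching b
  rw [commonMatching]
  ring

theorem commonMatching_comp_rotate_iterate (b : Fin 16 → R) (t : ℕ) :
    commonMatching (b ∘ rotate^[t]) = commonMatching b := by
  induction t with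
  | zero => rfl
  | succ t ih => rw [Function.iterate_succ, ← Function.comp_assoc, commonMatching_comp_rotate, ih]

theorem esymm_two_map_univ_fin_sixteen (b : Fin 16 → R) :
    (Finset.univ.val.map b).esymm 2 =
      ∑ t : Fin 3, sixBicliques (b ∘ rotate^[t]) + commonMatching b := by
  have hb : Finset.univ.val.map b = {b 0, b 1, b 2, b 3, b 4, b 5, b 6, b 7, b 8, b 9, b 10, b 11,
    b 12, b 13, b 14, b 15} := rfl
  simp only [hb, Multiset.insert_eq_cons, ← Multiset.cons_zero, esymm_cons_succ, esymm_zero,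
    esymm_zero_succ]
  simp only [Fin.sum_univ_three, Fin.coe_ofNat_eq_mod, Nat.zero_mod, Nat.one_mod, Nat.mod_succ,
    Function.iterate_succ, Function.iterate_zero, Function.comp_apply, id_eq, sixBicliques,
    commonMatching, rotate, Matrix.cons_val]
  ring

theorem isSumOfProducts_fourBicliques {b : Fin 16 → R} (hb : ∀ i, b i ∈ M) :
    IsSumOfProducts M 2 4 (fourBicliques b) := by
  refine (((IsSumOfProducts.mul_of_mem ?_ ?_).add (.mul_of_mem ?_ ?_)).add
    (.mul_of_mem ?_ ?_)).add (.mul_of_mem ?_ ?_) <;>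
    repeat' first | exact hb _ | apply M.add_mem

theorem isSumOfProducts_sixBicliques {b : Fin 16 → R} (hb : ∀ i, b i ∈ M) :
    IsSumOfProducts M 2 6 (sixBicliques b) := by
  refine (((((IsSumOfProducts.mul_of_mem ?_ ?_).add (.mul_of_mem ?_ ?_)).add
    (.mul_of_mem ?_ ?_)).add (.mul_of_mem ?_ ?_)).add (.mul_of_mem ?_ ?_)).add
    (.mul_of_mem ?_ ?_) <;>
    repeat' first | exact hb _ | apply M.add_mem

/-- The complete graph on four vertices has three perfect matchings, and the complement of each of
them is a biclique. Giving the `t`-th matching and the `t`-th biclique the factor `G t`, only the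
matchings have to be multiplied by `N`. -/
theorem IsSumOfProducts.esymm_two_mul_sum_add {r k l : ℕ} {s : Multiset R} (hcard : s.card = 4)
    (hs : ∀ a ∈ s, a ∈ M) {G : Fin 3 → R} {N : R} (hG : ∀ t, IsSumOfProducts M r k (G t))
    (hGN : ∀ t, IsSumOfProducts M r l (G t + N)) :
    IsSumOfProducts M (2 + r) (3 * (k + 2 * l)) (s.esymm 2 * (∑ t, G t + N)) := by
  obtain ⟨a, b, c, d, rfl⟩ := Multiset.card_eq_four.1 hcard
  simp only [Multiset.insert_eq_cons, Multiset.forall_mem_cons, Multiset.mem_singleton,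
    forall_eq] at hs
  obtain ⟨ha, hb, hc, hd⟩ := hs
  have matched {x y z w : R} (hx : x ∈ M) (hy : y ∈ M) (hz : z ∈ M) (hw : w ∈ M) (t : Fin 3) :
      IsSumOfProducts M (2 + r) (k + 2 * l)
        ((x + y) * (z + w) * G t + (x * y + z * w) * (G t + N)) := by
    have biclique := (mul_of_mem (M.add_mem hx hy) (M.add_mem hz hw)).mul (hG t)
    have matching := ((mul_of_mem hx hy).add (mul_of_mem hz hw)).mul (hGN t)
    rw [one_mul] at biclique
    exact biclique.add matching
  have hmatchings : ({a, b, c, d} : Multiset R).esymm 2 * (∑ t, G t + N) =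
      (a + b) * (c + d) * G 0 + (a * b + c * d) * (G 0 + N)
      + ((a + c) * (b + d) * G 1 + (a * c + b * d) * (G 1 + N))
      + ((a + d) * (b + c) * G 2 + (a * d + b * c) * (G 2 + N)) := by
    have he : ({a, b, c, d} : Multiset R).esymm 2 =
        a * b + a * c + a * d + b * c + b * d + c * d := by
      simp only [Multiset.insert_eq_cons, ← Multiset.cons_zero, esymm_cons_succ, esymm_zero,
        esymm_zero_succ]
      ring
    rw [he, Fin.sum_univ_three]
    ring
  rw [hmatchings]
  exact (((matched ha hb hc hd 0).add (matched ha hc hb hd 1)).add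
    (matched ha hd hb hc 2)).mono (by omega)

theorem isSumOfProducts_esymm_two_mul_esymm_two_of_card {s t : Multiset R} (hscard : s.card = 4)
    (htcard : t.card = 16) (hs : ∀ a ∈ s, a ∈ M) (ht : ∀ a ∈ t, a ∈ M) :
    IsSumOfProducts M 4 42 (s.esymm 2 * t.esymm 2) := by
  obtain ⟨b, rfl⟩ : ∃ b : Fin 16 → R, t = Finset.univ.val.map b := by
    obtain ⟨l, rfl⟩ := Quotient.exists_rep t
    have hl : l.length = 16 := htcard
    refine ⟨fun i => l[i], ?_⟩
    rw [Fin.univ_val_map]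
    change ((l : List R) : Multiset R) = _
    congr 1
    refine List.ext_getElem (hl.trans List.length_ofFn.symm) fun i _ _ => ?_
    rw [List.getElem_ofFn]
    rfl
  have hb (i : Fin 16) : b i ∈ M := ht _ (Multiset.mem_map_of_mem b (Finset.mem_univ i))
  rw [esymm_two_map_univ_fin_sixteen]
  refine IsSumOfProducts.esymm_two_mul_sum_add (k := 6) (l := 4) hscard hs
    (G := fun i => sixBicliques (b ∘ rotate^[i]))
    (fun i => isSumOfProducts_sixBicliques fun _ => hb _) fun i => ?_
  rw [← commonMatching_comp_rotate_iterate b i, sixBicliques_add_commonMatching]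
  exact isSumOfProducts_fourBicliques fun _ => hb _

theorem isSumOfProducts_esymm_two_mul_esymm_two_of_card_eq_four {s : Multiset R}
    (hcard : s.card = 4) (hs : ∀ a ∈ s, a ∈ M) (t : Multiset R) (ht : ∀ a ∈ t, a ∈ M) :
    IsSumOfProducts M 4 (14 * t.card / 5) (s.esymm 2 * t.esymm 2) := by
  refine IsSumOfProducts.mul_esymm_two_of_blocks (c := 15) (K := 42) (g := (14 * · / 5))
    (by norm_num) (fun u hu hu' => ?_)
    (fun u hu => isSumOfProducts_esymm_two_mul_esymm_two_of_card hcard hu hs) (fun n => ?_) t ht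
  · refine ((isSumOfProducts_esymm_two s hs).mul (isSumOfProducts_esymm_two u hu')).mono ?_
    rw [hcard]
    omega
  · omega

theorem isSumOfProducts_esymm_two_mul_esymm_two {s t : Multiset R}
    (hs : ∀ a ∈ s, a ∈ M) (ht : ∀ a ∈ t, a ∈ M) :
    IsSumOfProducts M 4 (14 * (s.card * t.card) / 15) (s.esymm 2 * t.esymm 2) := by
  rw [mul_comm (s.esymm 2)]
  refine IsSumOfProducts.mul_esymm_two_of_blocks (c := 3) (K := 14 * t.card / 5)
    (g := fun m => 14 * (m * t.card) / 15) (by norm_num) (fun u hu hu' => ?_)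
    (fun u hu hu' => ?_) (fun n => ?_) s hs
  · refine ((isSumOfProducts_esymm_two t ht).mul (isSumOfProducts_esymm_two u hu')).mono ?_
    interval_cases u.card <;> omega
  · rw [mul_comm (t.esymm 2)]
    exact isSumOfProducts_esymm_two_mul_esymm_two_of_card_eq_four hu hu' t ht
  · rw [show (n + 1 + 3) * t.card = (n + 1) * t.card + 3 * t.card by ring]
    omega

end BicliquesOnSixteenVertices

section Cost

variable {R : Type*} [CommSemiring R] {M : AddSubmonoid R}

/-- The least `k` such that the `r`-th elementary symmetric function of any `n` elements of `M` is
a sum of at most `k` products of `r` elements of `M`. -/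
noncomputable def esymmCost (M : AddSubmonoid R) (r n : ℕ) : ℕ :=
  sInf {k | ∀ s : Multiset R, s.card = n → (∀ a ∈ s, a ∈ M) → IsSumOfProducts M r k (s.esymm r)}

theorem isSumOfProducts_esymmCost (r : ℕ) {s : Multiset R} (hs : ∀ a ∈ s, a ∈ M) :
    IsSumOfProducts M r (esymmCost M r s.card) (s.esymm r) := by
  have hne : {k | ∀ t : Multiset R, t.card = s.card → (∀ a ∈ t, a ∈ M) →
      IsSumOfProducts M r k (t.esymm r)}.Nonempty :=
    ⟨_, fun t ht => ht ▸ isSumOfProducts_esymm_choose r t⟩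
  exact Nat.sInf_mem hne s rfl hs

theorem esymmCost_le {r n k : ℕ} (h : ∀ s : Multiset R, s.card = n → (∀ a ∈ s, a ∈ M) →
    IsSumOfProducts M r k (s.esymm r)) : esymmCost M r n ≤ k :=
  Nat.sInf_le h

theorem esymmCost_le_choose (r n : ℕ) : esymmCost M r n ≤ n.choose (r / 2) :=
  esymmCost_le fun s hcard => hcard ▸ isSumOfProducts_esymm_choose r s

theorem esymmCost_add_le {x y : ℕ} (r : ℕ) {k : ℕ × ℕ → ℕ}
    (h : ∀ p ∈ antidiagonal r, ∀ s t : Multiset R, s.card = x → t.card = y → (∀ a ∈ s, a ∈ M) →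
      (∀ a ∈ t, a ∈ M) → IsSumOfProducts M r (k p) (s.esymm p.1 * t.esymm p.2)) :
    esymmCost M r (x + y) ≤ ∑ p ∈ antidiagonal r, k p := by
  refine esymmCost_le fun s hcard hs => ?_
  obtain ⟨t, u, rfl, ht, hu⟩ := exists_add_eq_of_card_eq_add hcard
  rw [esymm_add]
  exact IsSumOfProducts.sum _ fun p hp => h p hp t u ht hu
    (fun a ha => hs a (Multiset.mem_add.2 (.inl ha)))
    (fun a ha => hs a (Multiset.mem_add.2 (.inr ha)))

theorem isSumOfProducts_esymm_mul_esymm {i j : ℕ} {s t : Multiset R} (hs : ∀ a ∈ s, a ∈ M)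
    (ht : ∀ a ∈ t, a ∈ M) :
    IsSumOfProducts M (i + j) (esymmCost M i s.card * esymmCost M j t.card)
      (s.esymm i * t.esymm j) :=
  (isSumOfProducts_esymmCost i hs).mul (isSumOfProducts_esymmCost j ht)

theorem sum_antidiagonal_two_mul_add_two {N : Type*} [AddCommMonoid N] (g : ℕ × ℕ → N) (d : ℕ) :
    ∑ p ∈ antidiagonal (2 * (d + 1)), g p =
      ∑ p ∈ antidiagonal (d + 1), g (2 * p.1, 2 * p.2) +
        ∑ p ∈ antidiagonal d, g (2 * p.1 + 1, 2 * p.2 + 1) := by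
  induction d generalizing g with
  | zero => simp [Finset.Nat.sum_antidiagonal_succ, add_comm, add_left_comm]
  | succ d ih =>
    have heven := Finset.Nat.sum_antidiagonal_succ (n := d + 1)
      (f := fun p => g (2 * p.1, 2 * p.2))
    have hodd := Finset.Nat.sum_antidiagonal_succ (n := d)
      (f := fun p => g (2 * p.1 + 1, 2 * p.2 + 1))
    rw [heven, hodd, show 2 * (d + 1 + 1) = 2 * (d + 1) + 1 + 1 by ring,
      Finset.Nat.sum_antidiagonal_succ, Finset.Nat.sum_antidiagonal_succ,
      ih fun p => g (p.1 + 1 + 1, p.2)]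
    simp only [mul_add, mul_zero, mul_one, zero_add, add_assoc, Nat.reduceAdd]
    abel

theorem sum_antidiagonal_esymmCost_odd_le (d x y : ℕ) :
    ∑ p ∈ antidiagonal d, esymmCost M (2 * p.1 + 1) x * esymmCost M (2 * p.2 + 1) y ≤
      (x + y).choose d := by
  have odd_le (i n : ℕ) : esymmCost M (2 * i + 1) n ≤ n.choose i := by
    simpa [show (2 * i + 1) / 2 = i by omega] using esymmCost_le_choose (M := M) (2 * i + 1) n
  rw [Nat.add_choose_eq]
  exact Finset.sum_le_sum fun p _ => Nat.mul_le_mul (odd_le p.1 x) (odd_le p.2 y)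

theorem esymmCost_two_mul_add_le (d x y : ℕ) :
    esymmCost M (2 * (d + 1)) (x + y) ≤
      ∑ p ∈ antidiagonal (d + 1), esymmCost M (2 * p.1) x * esymmCost M (2 * p.2) y +
        (x + y).choose d := by
  refine (esymmCost_add_le (k := fun p => esymmCost M p.1 x * esymmCost M p.2 y) _ ?_).trans ?_
  · rintro p hp s t rfl rfl hs ht
    rw [← mem_antidiagonal.1 hp]
    exact isSumOfProducts_esymm_mul_esymm hs ht
  · rw [sum_antidiagonal_two_mul_add_two]
    exact Nat.add_le_add_left (sum_antidiagonal_esymmCost_odd_le d x y) _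

theorem esymmCost_four_add_le (x y : ℕ) :
    esymmCost M 4 (x + y) ≤
      esymmCost M 4 x + esymmCost M 4 y + 14 * (x * y) / 15 + (x + y) := by
  let k (p : ℕ × ℕ) : ℕ :=
    if p = (2, 2) then 14 * (x * y) / 15 else esymmCost M p.1 x * esymmCost M p.2 y
  refine (esymmCost_add_le (k := k) 4 ?_).trans ?_
  · rintro p hp s t rfl rfl hs ht
    rcases eq_or_ne p (2, 2) with rfl | hne
    · simpa [k] using isSumOfProducts_esymm_two_mul_esymm_two hs ht
    · rw [← mem_antidiagonal.1 hp, show k p = _ from if_neg hne]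
      exact isSumOfProducts_esymm_mul_esymm hs ht
  · have h0 (n : ℕ) : esymmCost M 0 n ≤ 1 := by simpa using esymmCost_le_choose (M := M) 0 n
    have heven : ∑ p ∈ antidiagonal 2, k (2 * p.1, 2 * p.2) =
        esymmCost M 0 x * esymmCost M 4 y + 14 * (x * y) / 15 +
          esymmCost M 4 x * esymmCost M 0 y := by
      simp [Finset.Nat.sum_antidiagonal_succ, k, add_assoc]
    have hodd : ∑ p ∈ antidiagonal 1, k (2 * p.1 + 1, 2 * p.2 + 1) ≤ x + y := by
      simpa [Finset.Nat.sum_antidiagonal_succ, k] using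
        sum_antidiagonal_esymmCost_odd_le (M := M) 1 x y
    have hleft : esymmCost M 0 x * esymmCost M 4 y ≤ esymmCost M 4 y := by
      simpa using Nat.mul_le_mul_right (esymmCost M 4 y) (h0 x)
    have hright : esymmCost M 4 x * esymmCost M 0 y ≤ esymmCost M 4 x := by
      simpa using Nat.mul_le_mul_left (esymmCost M 4 x) (h0 y)
    rw [sum_antidiagonal_two_mul_add_two k 1, heven]
    omega

end Cost

section Extraction

variable {V : Finset ℕ} {r : ℕ}

namespace Block

theorem biUnion_inter_parts_subset (B : Block V r) (X : Finset ℕ) :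
    (Finset.univ.biUnion fun i => X ∩ B.parts i) ⊆ X :=
  Finset.biUnion_subset.2 fun _ _ => Finset.inter_subset_left

theorem card_biUnion_inter_parts (B : Block V r) (X : Finset ℕ) :
    (Finset.univ.biUnion fun i => X ∩ B.parts i).card = ∑ i, (X ∩ B.parts i).card :=
  Finset.card_biUnion fun i _ j _ hij =>
    (B.disj i j hij).mono Finset.inter_subset_right Finset.inter_subset_right

theorem mem_edges_iff {B : Block V r} {X : Finset ℕ} :
    X ∈ B.edges ↔ X ⊆ V ∧ X.card = r ∧ ∀ i, (X ∩ B.parts i).Nonempty := by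
  have hcard := B.card_biUnion_inter_parts X
  have hsub := B.biUnion_inter_parts_subset X
  constructor
  · rintro ⟨hone, hcover⟩
    have heq : (Finset.univ.biUnion fun i => X ∩ B.parts i) = X := by
      refine hsub.antisymm fun x hx => ?_
      obtain ⟨i, hi⟩ := hcover x hx
      exact Finset.mem_biUnion.2 ⟨i, Finset.mem_univ i, Finset.mem_inter.2 ⟨hx, hi⟩⟩
    refine ⟨fun x hx => ?_, ?_, fun i => Finset.card_pos.1 (by rw [hone i]; exact one_pos)⟩
    · obtain ⟨i, hi⟩ := hcover x hx
      exact B.subset i hi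
    · simpa [heq, hone] using hcard
  · rintro ⟨-, hXr, hmeet⟩
    have hpos (i : Fin r) : 1 ≤ (X ∩ B.parts i).card := Finset.card_pos.2 (hmeet i)
    have hr : ∑ _i : Fin r, 1 = X.card := by simp [hXr]
    have hge : ∑ _i : Fin r, 1 ≤ ∑ i, (X ∩ B.parts i).card :=
      Finset.sum_le_sum fun i _ => hpos i
    have heq := Finset.eq_of_subset_of_card_le hsub (by omega)
    have hsum : ∑ _i : Fin r, 1 = ∑ i, (X ∩ B.parts i).card := by rw [hr, ← hcard, heq]
    refine ⟨fun i => ?_, fun x hx => ?_⟩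
    · exact ((Finset.sum_eq_sum_iff_of_le fun i _ => hpos i).1 hsum i (Finset.mem_univ i)).symm
    · rw [← heq] at hx
      obtain ⟨i, -, hi⟩ := Finset.mem_biUnion.1 hx
      exact ⟨i, (Finset.mem_inter.1 hi).2⟩

end Block

theorem exactCover_of_fintype {ι : Type*} [Fintype ι] {F : Set (Finset ℕ)} {B : ι → Block V r}
    (hdisj : Pairwise fun j j' => Disjoint (B j).edges (B j').edges)
    (hunion : ⋃ j, (B j).edges = F) : ExactCover V r (Fintype.card ι) F := by
  let e := (Fintype.equivFin ι).symm
  exact ⟨B ∘ e, fun i j hij => hdisj (e.injective.ne hij),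
    (e.surjective.iUnion_comp fun j => (B j).edges).trans hunion⟩

/-- The product of the linear forms `∑ v ∈ S, a i v` with weights `a i`, for `i : Fin r`. -/
def weightProduct (a : Fin r → ℕ → ℕ) (S : Finset ℕ) : ℕ :=
  ∏ i, ∑ v ∈ S, a i v

theorem weightProduct_ne_zero_iff {a : Fin r → ℕ → ℕ} {S : Finset ℕ} :
    weightProduct a S ≠ 0 ↔ ∀ i, ∃ v ∈ S, a i v ≠ 0 := by
  simp [weightProduct, Finset.prod_ne_zero_iff]

theorem injective_of_weightProduct_eq_zero {a : Fin r → ℕ → ℕ}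
    (ha : ∀ S ⊆ V, S.card < r → weightProduct a S = 0) {g : Fin r → ℕ} (hgV : ∀ i, g i ∈ V)
    (hg : ∀ i, a i (g i) ≠ 0) : Function.Injective g := by
  have hne : weightProduct a (Finset.univ.image g) ≠ 0 :=
    weightProduct_ne_zero_iff.2 fun i =>
      ⟨g i, Finset.mem_image_of_mem g (Finset.mem_univ i), hg i⟩
  have hle : r ≤ (Finset.univ.image g).card := by
    by_contra! hlt
    exact hne (ha _ (Finset.image_subset_iff.2 fun i _ => hgV i) hlt)
  rw [← Set.injOn_univ, ← Finset.coe_univ, ← Finset.card_image_iff]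
  exact Finset.card_image_le.antisymm (by simpa using hle)

theorem disjoint_support_of_weightProduct_eq_zero {a : Fin r → ℕ → ℕ}
    (ha : ∀ S ⊆ V, S.card < r → weightProduct a S = 0) {S : Finset ℕ} (hS : S ⊆ V)
    (hne : weightProduct a S ≠ 0) {i j : Fin r} (hij : i ≠ j) :
    Disjoint {v ∈ V | a i v ≠ 0} {v ∈ V | a j v ≠ 0} := by
  choose w hwS hw using weightProduct_ne_zero_iff.1 hne
  rw [Finset.disjoint_left]
  intro v hvi hvj
  rw [Finset.mem_filter] at hvi hvj
  let g : Fin r → ℕ := Function.update (Function.update w i v) j v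
  have hg (c : Fin r) : g c ∈ V ∧ a c (g c) ≠ 0 := by
    rcases eq_or_ne c j with rfl | hcj
    · simpa [g] using hvj
    · rcases eq_or_ne c i with rfl | hci
      · simpa [g, hcj] using hvi
      · simpa [g, hcj, hci] using ⟨hS (hwS c), hw c⟩
  refine hij (injective_of_weightProduct_eq_zero ha (fun c => (hg c).1) (fun c => (hg c).2) ?_)
  simp [g, hij]

/-- The block whose parts are the supports of the weights `a i`; these are disjoint because a vertex
common to two of them would give a set with fewer than `r` vertices on which `weightProduct a` does
not vanish. -/
def Block.ofWeights (a : Fin r → ℕ → ℕ) (ha : ∀ S ⊆ V, S.card < r → weightProduct a S = 0)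
    (hne : ∃ S ⊆ V, weightProduct a S ≠ 0) : Block V r where
  parts i := {v ∈ V | a i v ≠ 0}
  nonempty i := by
    obtain ⟨S, hS, hSa⟩ := hne
    obtain ⟨v, hv, hav⟩ := weightProduct_ne_zero_iff.1 hSa i
    exact ⟨v, Finset.mem_filter.2 ⟨hS hv, hav⟩⟩
  subset _ := Finset.filter_subset _ _
  disj i j hij := by
    obtain ⟨S, hS, hSa⟩ := hne
    exact disjoint_support_of_weightProduct_eq_zero ha hS hSa hij

theorem Block.mem_edges_ofWeights {a : Fin r → ℕ → ℕ}
    (ha : ∀ S ⊆ V, S.card < r → weightProduct a S = 0)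
    (hne : ∃ S ⊆ V, weightProduct a S ≠ 0) {X : Finset ℕ} :
    X ∈ (Block.ofWeights a ha hne).edges ↔ X ⊆ V ∧ X.card = r ∧ weightProduct a X ≠ 0 := by
  rw [Block.mem_edges_iff, weightProduct_ne_zero_iff]
  refine and_congr_right fun hXV => and_congr_right fun _ => forall_congr' fun i => ?_
  refine exists_congr fun v => ?_
  rw [Finset.mem_inter, Block.ofWeights, Finset.mem_filter]
  exact and_congr_right fun hv => and_iff_right (hXV hv)

theorem exactCover_of_sum_weightProduct {ι : Type*} [Fintype ι] {a : ι → Fin r → ℕ → ℕ}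
    (hsum : ∀ S ⊆ V, ∑ j, weightProduct (a j) S = S.card.choose r)
    (hne : ∀ j, ∃ S ⊆ V, weightProduct (a j) S ≠ 0) :
    ExactCover V r (Fintype.card ι) {X | X ⊆ V ∧ X.card = r} := by
  have hzero (j : ι) (S : Finset ℕ) (hS : S ⊆ V) (hSr : S.card < r) :
      weightProduct (a j) S = 0 := by
    have h := hsum S hS
    rw [Nat.choose_eq_zero_of_lt hSr, Finset.sum_eq_zero_iff] at h
    exact h j (Finset.mem_univ j)
  have hone {X : Finset ℕ} (hX : X ⊆ V) (hXr : X.card = r) : ∑ j, weightProduct (a j) X = 1 := by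
    rw [hsum X hX, hXr, Nat.choose_self]
  refine exactCover_of_fintype (B := fun j => Block.ofWeights (a j) (hzero j) (hne j)) ?_ ?_
  · intro j j' hjj'
    rw [Set.disjoint_left]
    intro X hX hX'
    obtain ⟨hXV, hXr, hj⟩ := (Block.mem_edges_ofWeights _ _).1 hX
    obtain ⟨-, -, hj'⟩ := (Block.mem_edges_ofWeights _ _).1 hX'
    classical
    have hpair : weightProduct (a j) X + weightProduct (a j') X ≤ ∑ j, weightProduct (a j) X := by
      rw [← Finset.sum_pair (f := fun j => weightProduct (a j) X) hjj']
      exact Finset.sum_le_sum_of_subset (Finset.subset_univ _)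
    rw [hone hXV hXr] at hpair
    omega
  · ext X
    simp only [Set.mem_iUnion, Block.mem_edges_ofWeights, Set.mem_ofPred_eq]
    refine ⟨fun ⟨_, hXV, hXr, _⟩ => ⟨hXV, hXr⟩, fun ⟨hXV, hXr⟩ => ?_⟩
    obtain ⟨j, -, hj⟩ := Finset.exists_ne_zero_of_sum_ne_zero
      (by rw [hone hXV hXr]; exact one_ne_zero)
    exact ⟨j, hXV, hXr, hj⟩

/-- The functions `S ↦ ∑ v ∈ S, a v` on finite sets of vertices, for weights `a` on the vertices;
they stand for the sums of variables. -/
def linearForms : AddSubmonoid (Finset ℕ → ℕ) where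
  carrier := {φ | ∃ a : ℕ → ℕ, ∀ S, φ S = ∑ v ∈ S, a v}
  zero_mem' := ⟨0, by simp⟩
  add_mem' := by
    rintro φ ψ ⟨a, ha⟩ ⟨b, hb⟩
    exact ⟨a + b, fun S => by simp [ha, hb, Finset.sum_add_distrib]⟩

theorem exists_eq_weightProduct_of_mem_pow {φ : Finset ℕ → ℕ}
    (hφ : φ ∈ (linearForms : Set (Finset ℕ → ℕ)) ^ r) :
    ∃ a : Fin r → ℕ → ℕ, φ = weightProduct a := by
  obtain ⟨g, rfl⟩ := Set.mem_pow.1 hφ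
  choose a ha using fun i => (g i).2
  refine ⟨a, funext fun S => ?_⟩
  rw [List.prod_ofFn, Finset.prod_apply]
  exact Finset.prod_congr rfl fun i _ => ha i S

/-- The vertex `v` as a linear form, which plays the role of a variable: the `r`-th elementary
symmetric function of the vertices counts the `r`-element subsets of its argument. -/
def vertexForm (v : ℕ) (S : Finset ℕ) : ℕ := if v ∈ S then 1 else 0

theorem vertexForm_mem_linearForms (v : ℕ) : vertexForm v ∈ linearForms :=
  ⟨Pi.single v 1, fun S => by simp [vertexForm]⟩

theorem esymm_vertexForm_apply {S : Finset ℕ} (hS : S ⊆ V) (r : ℕ) :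
    (V.val.map vertexForm).esymm r S = S.card.choose r := by
  rw [Finset.esymm_map_val, Finset.sum_apply, ← Finset.card_powersetCard]
  have hprod (T : Finset ℕ) : (∏ v ∈ T, vertexForm v) S = if T ⊆ S then 1 else 0 := by
    simp only [Finset.prod_apply, vertexForm, Finset.prod_boole, Finset.subset_iff]
  simp only [hprod]
  rw [← Finset.card_filter]
  congr 1
  ext T
  grind

theorem sum_filter_exists_apply_ne_zero {α R : Type*} [AddCommMonoid R] (P : Multiset (α → R))
    (A : Set α) [DecidablePred fun q : α → R => ∃ x ∈ A, q x ≠ 0] {x : α} (hx : x ∈ A) :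
    (P.filter fun q => ∃ x ∈ A, q x ≠ 0).sum x = P.sum x := by
  have hzero : (P.filter fun q => ¬∃ x ∈ A, q x ≠ 0).sum x = 0 := by
    rw [Pi.multiset_sum_apply]
    refine Multiset.sum_eq_zero fun y hy => ?_
    obtain ⟨q, hq, rfl⟩ := Multiset.mem_map.1 hy
    exact by_contra fun h => (Multiset.mem_filter.1 hq).2 ⟨x, hx, h⟩
  rw [← Multiset.sum_filter_add_sum_filter_not (s := P) fun q => ∃ x ∈ A, q x ≠ 0,
    Pi.add_apply, hzero, add_zero]

theorem f_le_esymmCost (r n : ℕ) : f r n ≤ esymmCost linearForms r n := by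
  classical
  let V := Finset.range n
  obtain ⟨P, hPcard, hP, hsum⟩ := isSumOfProducts_esymmCost (M := linearForms) r
    (s := V.val.map vertexForm) (by simp [vertexForm_mem_linearForms])
  choose! a ha using fun q hq => exists_eq_weightProduct_of_mem_pow (hP q hq)
  let Q := P.filter fun q => ∃ S ∈ {S : Finset ℕ | S ⊆ V}, q S ≠ 0
  have hQP : Q ≤ P := Multiset.filter_le _ P
  have haQ (q : Q) : weightProduct (a q.1) = q.1 :=
    (ha _ (Multiset.mem_of_le hQP (Multiset.coe_mem))).symm
  have hcard : Fintype.card Q ≤ esymmCost linearForms r n := by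
    rw [Multiset.card_coe]
    exact (Multiset.card_le_card hQP).trans (hPcard.trans_eq (by simp [V]))
  have hcover : ExactCover V r (Fintype.card Q) {X | X ⊆ V ∧ X.card = r} := by
    refine exactCover_of_sum_weightProduct (a := fun q => a q.1) (fun S hS => ?_) fun q => ?_
    · simp only [haQ]
      rw [Finset.sum_eq_multiset_sum, Multiset.map_univ Q (· S), ← Pi.multiset_sum_apply,
        sum_filter_exists_apply_ne_zero P _ hS, hsum, esymm_vertexForm_apply hS]
    · rw [haQ]
      exact (Multiset.mem_filter.1 (Multiset.coe_mem (x := q))).2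
  exact (Nat.sInf_le hcover).trans hcard

end Extraction

section Growth

/-- The axioms of a cost function under splitting an `n`-element set into parts of sizes `x` and
`y`; it will be applied to `F d n = esymmCost M (2 * d) n` and `γ ^ 3 = 14 / 15`. -/
structure IsSplittingCost (γ : ℝ) (F : ℕ → ℕ → ℝ) : Prop where
  nonneg (d n : ℕ) : 0 ≤ F d n
  le_choose (d n : ℕ) : F d n ≤ n.choose d
  add_le (d x y : ℕ) :
    F (d + 1) (x + y) ≤ ∑ p ∈ antidiagonal (d + 1), F p.1 x * F p.2 y + (x + y).choose d
  two_add_le (x y : ℕ) : F 2 (x + y) ≤ F 2 x + F 2 y + γ ^ 3 * (x * y) + (x + y)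

/-- The coefficient of `n ^ d / d !` in the bound for a splitting cost in degree `d`. -/
def leadCoeff (γ : ℝ) : ℕ → ℝ
  | 1 => 1
  | 2 => γ ^ 3
  | d => γ ^ d

/-- The power of `t` that is multiplied by a logarithm in the bound for a splitting cost in degree
`d`; degrees `0` and `1` have no error term. -/
def lowerOrder (d : ℕ) (t : ℝ) : ℝ :=
  if d ≤ 1 then 0 else t ^ (d - 1)

theorem lowerOrder_nonneg (d : ℕ) {t : ℝ} (ht : 0 ≤ t) : 0 ≤ lowerOrder d t := by
  unfold lowerOrder
  positivity

theorem lowerOrder_of_two_le {d : ℕ} (hd : 2 ≤ d) (t : ℝ) : lowerOrder d t = t ^ (d - 1) :=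
  if_neg (by omega)

theorem inv_factorial_add_inv_factorial_le_choose {i j : ℕ} (hij : i + j ≠ 0) :
    (if i = 0 then 0 else (j.factorial : ℝ)⁻¹) + (if j = 0 then 0 else (i.factorial : ℝ)⁻¹) ≤
      (i + j).choose i := by
  rcases Nat.eq_zero_or_eq_succ_pred i with rfl | hi
  · simp [show j ≠ 0 by omega]
  rcases Nat.eq_zero_or_eq_succ_pred j with rfl | hj
  · simp [show i ≠ 0 by omega]
  have hchoose : 2 ≤ (i + j).choose i := by
    rw [hi, hj, Nat.succ_eq_add_one, Nat.succ_eq_add_one, ← add_assoc, Nat.choose_succ_succ']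
    exact Nat.add_le_add (a := 1) (c := 1) (Nat.choose_pos (by omega)) (Nat.choose_pos (by omega))
  have hinv (m : ℕ) : (m.factorial : ℝ)⁻¹ ≤ 1 :=
    inv_le_one_of_one_le₀ (mod_cast m.factorial_pos)
  have hchoose' : (2 : ℝ) ≤ (i + j).choose i := mod_cast hchoose
  rw [if_neg (by omega), if_neg (by omega)]
  linarith [hinv i, hinv j]

theorem sum_antidiagonal_lowerOrder_le {d : ℕ} (hd : d ≠ 0) {x y : ℝ} (hx : 0 ≤ x) (hy : 0 ≤ y) :
    ∑ p ∈ antidiagonal (d + 1), (lowerOrder p.1 x * (y ^ p.2 / p.2.factorial)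
      + x ^ p.1 / p.1.factorial * lowerOrder p.2 y) ≤ (x + y) ^ d := by
  have lowerOrder_succ (m : ℕ) (t : ℝ) :
      lowerOrder (m + 1) t = if m = 0 then 0 else t ^ m := by
    simp [lowerOrder]
  have lowerOrder_zero (t : ℝ) : lowerOrder 0 t = 0 := rfl
  rw [Finset.sum_add_distrib, Finset.Nat.sum_antidiagonal_succ, Finset.Nat.sum_antidiagonal_succ',
    lowerOrder_zero, lowerOrder_zero, zero_mul, mul_zero, zero_add, zero_add,
    ← Finset.sum_add_distrib, (Commute.all x y).add_pow']
  refine Finset.sum_le_sum fun p hp => ?_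
  have hpd := mem_antidiagonal.1 hp
  have hcoeff := inv_factorial_add_inv_factorial_le_choose (i := p.1) (j := p.2) (by omega)
  calc lowerOrder (p.1 + 1) x * (y ^ p.2 / p.2.factorial)
        + x ^ p.1 / p.1.factorial * lowerOrder (p.2 + 1) y
      = ((if p.1 = 0 then 0 else (p.2.factorial : ℝ)⁻¹)
          + (if p.2 = 0 then 0 else (p.1.factorial : ℝ)⁻¹)) * (x ^ p.1 * y ^ p.2) := by
        simp only [lowerOrder_succ]
        split_ifs <;> ring
    _ ≤ (p.1 + p.2).choose p.1 * (x ^ p.1 * y ^ p.2) := by gcongr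
    _ = d.choose p.1 • (x ^ p.1 * y ^ p.2) := by rw [hpd, nsmul_eq_mul]

variable {γ : ℝ}

theorem leadCoeff_of_three_le {d : ℕ} (hd : 3 ≤ d) : leadCoeff γ d = γ ^ d := by
  match d, hd with
  | _ + 3, _ => rfl

theorem leadCoeff_mem_Icc (hγ : γ ∈ Set.Icc (9 / 10) 1) (d : ℕ) :
    leadCoeff γ d ∈ Set.Icc 0 1 := by
  have hγ0 : 0 ≤ γ := by linarith [hγ.1]
  have hpow (m : ℕ) : γ ^ m ∈ Set.Icc 0 1 := ⟨pow_nonneg hγ0 m, pow_le_one₀ hγ0 hγ.2⟩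
  unfold leadCoeff
  split
  · simp
  · exact hpow 3
  · exact hpow d

theorem leadCoeff_le_pow (hγ : γ ∈ Set.Icc (9 / 10) 1) {d : ℕ} (hd : 2 ≤ d) :
    leadCoeff γ d ≤ γ ^ d := by
  rcases hd.eq_or_lt with rfl | hd
  · exact pow_le_pow_of_le_one (by linarith [hγ.1]) hγ.2 (by norm_num)
  · exact (leadCoeff_of_three_le hd).le

/-- The contribution of the splitting type `p` to the amount by which `γ ^ d * (x + y) ^ d` exceeds
the sum of the products of the leading terms of the two parts. -/
def splittingSlack (γ x y : ℝ) (p : ℕ × ℕ) : ℝ :=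
  (p.1 + p.2).choose p.1 * (γ ^ (p.1 + p.2) - leadCoeff γ p.1 * leadCoeff γ p.2)
    * (x ^ p.1 * y ^ p.2)

variable {x y : ℝ}

theorem splittingSlack_swap (p : ℕ × ℕ) :
    splittingSlack γ y x p.swap = splittingSlack γ x y p := by
  rw [splittingSlack, splittingSlack, Prod.fst_swap, Prod.snd_swap, add_comm p.2,
    ← Nat.choose_symm_add]
  ring

theorem splittingSlack_zero_left {d : ℕ} (hd : 3 ≤ d) : splittingSlack γ x y (0, d) = 0 := by
  have hzero : leadCoeff γ 0 = 1 := by simp [leadCoeff]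
  simp [splittingSlack, leadCoeff_of_three_le hd, hzero]

theorem splittingSlack_nonneg (hγ : γ ∈ Set.Icc (9 / 10) 1) (hx : 0 ≤ x) (hy : 0 ≤ y) {p : ℕ × ℕ}
    (h₁ : 2 ≤ p.1) (h₂ : 2 ≤ p.2) : 0 ≤ splittingSlack γ x y p := by
  have hγ0 : 0 ≤ γ := by linarith [hγ.1]
  have hle : leadCoeff γ p.1 * leadCoeff γ p.2 ≤ γ ^ (p.1 + p.2) := by
    rw [pow_add]
    exact mul_le_mul (leadCoeff_le_pow hγ h₁) (leadCoeff_le_pow hγ h₂)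
      (leadCoeff_mem_Icc hγ _).1 (pow_nonneg hγ0 _)
  have := sub_nonneg.2 hle
  unfold splittingSlack
  positivity

theorem splittingSlack_one_add_two_nonneg (hγ : γ ∈ Set.Icc (9 / 10) 1) (hx : 0 ≤ x) (hy : 0 ≤ y)
    (hyx : y ≤ 3 / 2 * x) (k : ℕ) :
    0 ≤ splittingSlack γ x y (1, k + 4) + splittingSlack γ x y (2, k + 3) := by
  obtain ⟨hγ₁, hγ₂⟩ := hγ
  have heq : splittingSlack γ x y (1, k + 4) + splittingSlack γ x y (2, k + 3) =
      γ ^ (k + 4) * (1 - γ) * (k + 5) * x * y ^ (k + 3) * (γ * ((k + 4) / 2) * x - y) := by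
    have hchoose : ((2 + (k + 3)).choose 2 : ℝ) = (k + 5) * (k + 4) / 2 := by
      rw [Nat.cast_choose_two]
      push_cast
      ring
    simp only [splittingSlack, hchoose, Nat.choose_one_right, leadCoeff]
    push_cast
    ring
  have hfactor : y ≤ γ * ((k + 4) / 2) * x := by
    have : 3 / 2 ≤ γ * (((k : ℝ) + 4) / 2) := by nlinarith [k.cast_nonneg (α := ℝ)]
    nlinarith
  have := sub_nonneg.2 hfactor
  have := sub_nonneg.2 hγ₂
  have : 0 ≤ γ := by linarith
  rw [heq]
  positivity

theorem sum_antidiagonal_splittingSlack_three :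
    ∑ p ∈ antidiagonal 3, splittingSlack γ x y p = 0 := by
  simp [Finset.Nat.sum_antidiagonal_succ, splittingSlack, leadCoeff]

theorem sum_antidiagonal_splittingSlack_four_nonneg (hγ : γ ∈ Set.Icc (9 / 10) 1) (hx : 0 ≤ x)
    (hy : 0 ≤ y) (hxy : x ≤ 3 / 2 * y) (hyx : y ≤ 3 / 2 * x) :
    0 ≤ ∑ p ∈ antidiagonal 4, splittingSlack γ x y p := by
  obtain ⟨hγ₁, hγ₂⟩ := hγ
  have heq : ∑ p ∈ antidiagonal 4, splittingSlack γ x y p =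
      γ ^ 3 * (1 - γ) * (x * y) * (6 * (γ * (1 + γ)) * (x * y) - 4 * (x ^ 2 + y ^ 2)) := by
    simp only [Finset.Nat.sum_antidiagonal_succ, Finset.HasAntidiagonal.antidiagonal_zero,
      Finset.sum_singleton, splittingSlack, leadCoeff, Nat.choose]
    push_cast
    ring
  have hfactor : 4 * (x ^ 2 + y ^ 2) ≤ 6 * (γ * (1 + γ)) * (x * y) := by
    have hbalanced : 4 * (x ^ 2 + y ^ 2) ≤ 9 * (x * y) := by
      nlinarith [mul_nonneg (sub_nonneg.2 hxy) (sub_nonneg.2 hyx)]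
    have : 9 ≤ 6 * (γ * (1 + γ)) := by nlinarith
    nlinarith [mul_nonneg hx hy]
  have := sub_nonneg.2 hfactor
  have := sub_nonneg.2 hγ₂
  have : 0 ≤ γ := by linarith
  rw [heq]
  positivity

theorem sum_antidiagonal_splittingSlack_nonneg (hγ : γ ∈ Set.Icc (9 / 10) 1) (hx : 0 ≤ x)
    (hy : 0 ≤ y) (hxy : x ≤ 3 / 2 * y) (hyx : y ≤ 3 / 2 * x) {d : ℕ} (hd : 3 ≤ d) :
    0 ≤ ∑ p ∈ antidiagonal d, splittingSlack γ x y p := by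
  match d, hd with
  | 3, _ => exact sum_antidiagonal_splittingSlack_three.ge
  | 4, _ => exact sum_antidiagonal_splittingSlack_four_nonneg hγ hx hy hxy hyx
  | k + 5, _ =>
    have hleft := splittingSlack_one_add_two_nonneg hγ hx hy hyx k
    have hright := splittingSlack_one_add_two_nonneg hγ hy hx hxy k
    have hmiddle : splittingSlack γ x y (k + 3, 2) ≤
        ∑ p ∈ antidiagonal k, splittingSlack γ x y (p.1 + 3, p.2 + 2) :=
      Finset.single_le_sum (f := fun p : ℕ × ℕ => splittingSlack γ x y (p.1 + 3, p.2 + 2))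
        (fun p _ => splittingSlack_nonneg hγ hx hy (Nat.le_add_left 2 _) (Nat.le_add_left 2 _))
        (a := (k, 0)) (by simp)
    have hzero : splittingSlack γ x y (k + 5, 0) = 0 := by
      rw [← splittingSlack_swap]
      exact splittingSlack_zero_left (by omega)
    rw [← splittingSlack_swap, ← splittingSlack_swap (2, k + 3)] at hright
    simp only [Prod.swap_prod_mk] at hright
    rw [Finset.Nat.sum_antidiagonal_succ, Finset.Nat.sum_antidiagonal_succ,
      Finset.Nat.sum_antidiagonal_succ, Finset.Nat.sum_antidiagonal_succ',
      Finset.Nat.sum_antidiagonal_succ', splittingSlack_zero_left (by omega)]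
    simp only [zero_add, Nat.add_assoc, Nat.reduceAdd] at hmiddle ⊢
    linarith

/-- The leading term of the bound for a splitting cost in degree `d` on a set of size `t`. -/
noncomputable def leadTerm (γ : ℝ) (d : ℕ) (t : ℝ) : ℝ :=
  leadCoeff γ d * (t ^ d / d.factorial)

theorem leadTerm_nonneg (hγ : γ ∈ Set.Icc (9 / 10) 1) (d : ℕ) {t : ℝ} (ht : 0 ≤ t) :
    0 ≤ leadTerm γ d t :=
  mul_nonneg (leadCoeff_mem_Icc hγ d).1 (by positivity)

theorem leadTerm_le (hγ : γ ∈ Set.Icc (9 / 10) 1) (d : ℕ) {t : ℝ} (ht : 0 ≤ t) :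
    leadTerm γ d t ≤ t ^ d / d.factorial :=
  mul_le_of_le_one_left (by positivity) (leadCoeff_mem_Icc hγ d).2

theorem choose_eq_leadTerm_of_le_one {d : ℕ} (hd : d ≤ 1) (n : ℕ) :
    (n.choose d : ℝ) = leadTerm γ d n := by
  interval_cases d <;> simp [leadTerm, leadCoeff]

theorem leadTerm_two (t : ℝ) : leadTerm γ 2 t = γ ^ 3 * t ^ 2 / 2 := by
  simp [leadTerm, leadCoeff, mul_div_assoc]

theorem leadTerm_mul_leadTerm_eq (p : ℕ × ℕ) :
    leadTerm γ p.1 x * leadTerm γ p.2 y =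
      (γ ^ (p.1 + p.2) * ((p.1 + p.2).choose p.1 • (x ^ p.1 * y ^ p.2)) - splittingSlack γ x y p)
        / (p.1 + p.2).factorial := by
  have hfactorial : ((p.1 + p.2).choose p.1 * p.1.factorial * p.2.factorial : ℝ) =
      (p.1 + p.2).factorial := by
    rw [Nat.choose_symm_add]
    exact_mod_cast Nat.add_choose_mul_factorial_mul_factorial p.1 p.2
  have h₁ : (p.1.factorial : ℝ) ≠ 0 := mod_cast p.1.factorial_ne_zero
  have h₂ : (p.2.factorial : ℝ) ≠ 0 := mod_cast p.2.factorial_ne_zero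
  have h₃ : ((p.1 + p.2).choose p.1 : ℝ) ≠ 0 := mod_cast (Nat.choose_pos (by omega)).ne'
  rw [leadTerm, leadTerm, splittingSlack, nsmul_eq_mul, ← hfactorial]
  field_simp
  ring

theorem sum_antidiagonal_leadTerm_mul_le (hγ : γ ∈ Set.Icc (9 / 10) 1) (hx : 0 ≤ x) (hy : 0 ≤ y)
    (hxy : x ≤ 3 / 2 * y) (hyx : y ≤ 3 / 2 * x) {d : ℕ} (hd : 3 ≤ d) :
    ∑ p ∈ antidiagonal d, leadTerm γ p.1 x * leadTerm γ p.2 y ≤ leadTerm γ d (x + y) := by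
  calc ∑ p ∈ antidiagonal d, leadTerm γ p.1 x * leadTerm γ p.2 y
      = ∑ p ∈ antidiagonal d,
          (γ ^ d * (d.choose p.1 • (x ^ p.1 * y ^ p.2)) - splittingSlack γ x y p)
            / d.factorial :=
        Finset.sum_congr rfl fun p hp => by
          rw [leadTerm_mul_leadTerm_eq, mem_antidiagonal.1 hp]
    _ = (γ ^ d * (x + y) ^ d - ∑ p ∈ antidiagonal d, splittingSlack γ x y p) / d.factorial := by
        rw [← Finset.sum_div, Finset.sum_sub_distrib, ← Finset.mul_sum,
          (Commute.all x y).add_pow']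
    _ ≤ γ ^ d * (x + y) ^ d / d.factorial := by
        gcongr
        exact sub_le_self _ (sum_antidiagonal_splittingSlack_nonneg hγ hx hy hxy hyx hd)
    _ = leadTerm γ d (x + y) := by rw [leadTerm, leadCoeff_of_three_le hd, mul_div_assoc]

namespace IsSplittingCost

variable {F : ℕ → ℕ → ℝ} {x y : ℕ} {L : ℝ}

theorem mul_le_leadTerm_mul_leadTerm_add (hF : IsSplittingCost γ F)
    (hγ : γ ∈ Set.Icc (9 / 10) 1) (hL : 0 ≤ L) {i j : ℕ}
    (hi : F i x ≤ leadTerm γ i x + L * lowerOrder i x)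
    (hj : F j y ≤ leadTerm γ j y + L * lowerOrder j y) :
    F i x * F j y ≤ leadTerm γ i x * leadTerm γ j y +
      L * (lowerOrder i x * (y ^ j / j.factorial) + x ^ i / i.factorial * lowerOrder j y) := by
  have herror (d n : ℕ) : 0 ≤ L * lowerOrder d n :=
    mul_nonneg hL (lowerOrder_nonneg d n.cast_nonneg)
  calc F i x * F j y
      ≤ (leadTerm γ i x + L * lowerOrder i x) * F j y :=
        mul_le_mul_of_nonneg_right hi (hF.nonneg j y)
    _ = leadTerm γ i x * F j y + L * lowerOrder i x * F j y := add_mul ..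
    _ ≤ leadTerm γ i x * (leadTerm γ j y + L * lowerOrder j y) +
          L * lowerOrder i x * (y ^ j / j.factorial) :=
        add_le_add (mul_le_mul_of_nonneg_left hj (leadTerm_nonneg hγ i x.cast_nonneg))
          (mul_le_mul_of_nonneg_left ((hF.le_choose j y).trans (Nat.choose_le_pow_div j y))
            (herror i x))
    _ ≤ leadTerm γ i x * leadTerm γ j y + x ^ i / i.factorial * (L * lowerOrder j y) +
          L * lowerOrder i x * (y ^ j / j.factorial) := by
        rw [mul_add]
        gcongr
        · exact herror j y
        · exact leadTerm_le hγ i x.cast_nonneg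
    _ = _ := by ring

theorem le_leadTerm_add_of_add (hF : IsSplittingCost γ F) (hγ : γ ∈ Set.Icc (9 / 10) 1)
    (hxy : (x : ℝ) ≤ 3 / 2 * y) (hyx : (y : ℝ) ≤ 3 / 2 * x) (hL : 0 ≤ L)
    (hFx : ∀ d, F d x ≤ leadTerm γ d x + L * lowerOrder d x)
    (hFy : ∀ d, F d y ≤ leadTerm γ d y + L * lowerOrder d y) (d : ℕ) :
    F d (x + y : ℕ) ≤ leadTerm γ d (x + y : ℕ) + (L + 1) * lowerOrder d (x + y : ℕ) := by
  obtain hd | rfl | ⟨e, rfl⟩ : d ≤ 1 ∨ d = 2 ∨ ∃ e, d = e + 3 := by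
    rcases lt_or_ge d 3 with h | h
    · omega
    · exact .inr (.inr ⟨d - 3, by omega⟩)
  · have herror := mul_nonneg (by linarith : 0 ≤ L + 1)
      (lowerOrder_nonneg d (Nat.cast_nonneg (x + y)))
    linarith [hF.le_choose d (x + y), choose_eq_leadTerm_of_le_one (γ := γ) hd (x + y)]
  · have hx := hFx 2
    have hy := hFy 2
    simp only [leadTerm_two, lowerOrder_of_two_le le_rfl, Nat.cast_add, Nat.add_one_sub_one,
      pow_one] at hx hy ⊢
    linear_combination hF.two_add_le x y + hx + hy
  · have hchoose : ((x + y).choose (e + 2) : ℝ) ≤ (x + y : ℝ) ^ (e + 2) :=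
      mod_cast Nat.choose_le_pow (x + y) (e + 2)
    have hsum := Finset.sum_le_sum fun (p : ℕ × ℕ) (_ : p ∈ antidiagonal (e + 3)) =>
      hF.mul_le_leadTerm_mul_leadTerm_add hγ hL (hFx p.1) (hFy p.2)
    rw [Finset.sum_add_distrib, ← Finset.mul_sum] at hsum
    have hlead := sum_antidiagonal_leadTerm_mul_le hγ x.cast_nonneg y.cast_nonneg hxy hyx
      (Nat.le_add_left 3 e)
    have herror := mul_le_mul_of_nonneg_left
      (sum_antidiagonal_lowerOrder_le (d := e + 2) (by omega) x.cast_nonneg y.cast_nonneg) hL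
    rw [lowerOrder_of_two_le (by omega), Nat.cast_add, Nat.add_succ_sub_one]
    linarith [hF.add_le (e + 2) x y]

theorem le_leadTerm_of_two (hF : IsSplittingCost γ F) (hγ : γ ∈ Set.Icc (9 / 10) 1) (d : ℕ) :
    F d 2 ≤ leadTerm γ d (2 : ℕ) := by
  refine (hF.le_choose d 2).trans ?_
  obtain hd | rfl | hd : d ≤ 1 ∨ d = 2 ∨ 2 < d := by omega
  · exact (choose_eq_leadTerm_of_le_one hd 2).le
  · have : (9 / 10 : ℝ) ^ 3 ≤ γ ^ 3 := pow_le_pow_left₀ (by norm_num) hγ.1 3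
    rw [leadTerm_two, Nat.choose_self]
    push_cast
    linarith
  · rw [Nat.choose_eq_zero_of_lt hd, Nat.cast_zero]
    exact leadTerm_nonneg hγ d (Nat.cast_nonneg 2)

theorem le_leadTerm_add_of_three (hF : IsSplittingCost γ F) (hγ : γ ∈ Set.Icc (9 / 10) 1) (d : ℕ) :
    F d 3 ≤ leadTerm γ d (3 : ℕ) + lowerOrder d (3 : ℕ) := by
  refine (hF.le_choose d 3).trans ?_
  rcases Nat.lt_or_ge d 2 with hd | hd
  · rw [choose_eq_leadTerm_of_le_one (Nat.le_of_lt_succ hd)]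
    exact le_add_of_nonneg_right (lowerOrder_nonneg d (Nat.cast_nonneg 3))
  · have hchoose : Nat.choose 3 d ≤ 3 ^ (d - 1) :=
      (Nat.choose_le_middle d 3).trans (Nat.le_self_pow (by omega) 3)
    rw [lowerOrder_of_two_le hd]
    exact le_add_of_nonneg_of_le (leadTerm_nonneg hγ d (Nat.cast_nonneg 3)) (mod_cast hchoose)

theorem le_leadTerm_add_clog (hF : IsSplittingCost γ F) (hγ : γ ∈ Set.Icc (9 / 10) 1) {n : ℕ}
    (hn : 2 ≤ n) (d : ℕ) :
    F d n ≤ leadTerm γ d n + ((Nat.clog 2 n : ℝ) - 1) * lowerOrder d n := by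
  induction n using Nat.strong_induction_on generalizing d with
  | _ n ih =>
    obtain rfl | rfl | hn : n = 2 ∨ n = 3 ∨ 4 ≤ n := by omega
    · have hclog : Nat.clog 2 2 = 1 := by simp [Nat.clog_of_two_le]
      simpa [hclog] using hF.le_leadTerm_of_two hγ d
    · have hclog : Nat.clog 2 3 = 2 := by simp [Nat.clog_of_two_le]
      convert hF.le_leadTerm_add_of_three hγ d using 2
      rw [hclog]
      norm_num
    · obtain ⟨x, y, rfl, hxy, hyx⟩ : ∃ x y, n = x + y ∧ x ≤ y ∧ y ≤ x + 1 :=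
        ⟨n / 2, n - n / 2, by omega, by omega, by omega⟩
      have hclog : Nat.clog 2 (x + y) = Nat.clog 2 y + 1 := by
        rw [Nat.clog_of_two_le one_lt_two (by omega), show (x + y + 2 - 1) / 2 = y by omega]
      have hL : (0 : ℝ) ≤ (Nat.clog 2 y : ℝ) - 1 :=
        sub_nonneg.2 (mod_cast Nat.clog_pos one_lt_two (by omega))
      have hFx (d : ℕ) : F d x ≤ leadTerm γ d x + ((Nat.clog 2 y : ℝ) - 1) * lowerOrder d x := by
        refine (ih x (by omega) (by omega) d).trans ?_
        gcongr
        exact lowerOrder_nonneg d x.cast_nonneg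
      have hyx' : (y : ℝ) ≤ 3 / 2 * x := by
        have : 2 * y ≤ 3 * x := by omega
        have : (2 * y : ℝ) ≤ 3 * x := mod_cast this
        linarith
      have hxy' : (x : ℝ) ≤ 3 / 2 * y := by
        have : (x : ℝ) ≤ y := mod_cast hxy
        linarith [y.cast_nonneg (α := ℝ)]
      convert hF.le_leadTerm_add_of_add hγ hxy' hyx' hL hFx (ih y (by omega) (by omega)) d using 3
      rw [hclog]
      push_cast
      ring

theorem le_pow_add_logb (hF : IsSplittingCost γ F) (hγ : γ ∈ Set.Icc (9 / 10) 1) {d : ℕ}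
    (hd : 2 ≤ d) (n : ℕ) :
    F d n ≤ γ ^ d * n ^ d / d.factorial + n ^ (d - 1) * Real.logb 2 n := by
  have hγ0 : 0 ≤ γ := by linarith [hγ.1]
  rcases Nat.lt_or_ge n 2 with hn | hn
  · have hlog : 0 ≤ Real.logb 2 n := by interval_cases n <;> simp
    calc F d n ≤ n.choose d := hF.le_choose d n
      _ = 0 := by rw [Nat.choose_eq_zero_of_lt (by omega), Nat.cast_zero]
      _ ≤ _ := by positivity
  have hclog : (Nat.clog 2 n : ℝ) - 1 ≤ Real.logb 2 n := by
    have hlog : 0 ≤ Real.logb 2 n := Real.logb_nonneg one_lt_two (mod_cast by omega)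
    rw [← Real.natCeil_logb_natCast]
    exact sub_le_iff_le_add.2 (Nat.ceil_lt_add_one hlog).le
  calc F d n ≤ leadTerm γ d n + ((Nat.clog 2 n : ℝ) - 1) * lowerOrder d n :=
        hF.le_leadTerm_add_clog hγ hn d
    _ ≤ γ ^ d * (n ^ d / d.factorial) + Real.logb 2 n * n ^ (d - 1) := by
        rw [leadTerm, lowerOrder_of_two_le hd]
        gcongr
        exact leadCoeff_le_pow hγ hd
    _ = _ := by ring

end IsSplittingCost

end Growth

theorem isSplittingCost_esymmCost {R : Type*} [CommSemiring R] (M : AddSubmonoid R) {γ : ℝ}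
    (hγ : γ ^ 3 = 14 / 15) : IsSplittingCost γ fun d n => (esymmCost M (2 * d) n : ℝ) where
  nonneg _ _ := Nat.cast_nonneg _
  le_choose d n := by
    have h := esymmCost_le_choose (M := M) (2 * d) n
    rw [Nat.mul_div_cancel_left d two_pos] at h
    exact_mod_cast h
  add_le d x y := mod_cast esymmCost_two_mul_add_le (M := M) d x y
  two_add_le x y := by
    have h : (esymmCost M 4 (x + y) : ℝ) ≤
        esymmCost M 4 x + esymmCost M 4 y + ((14 * (x * y) / 15 : ℕ) : ℝ) + (x + y) :=
      mod_cast esymmCost_four_add_le (M := M) x y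
    have hdiv : ((14 * (x * y) / 15 : ℕ) : ℝ) ≤ 14 * (x * y) / 15 := mod_cast Nat.cast_div_le
    rw [hγ]
    linarith

theorem esymmCost_even_le {R : Type*} [CommSemiring R] (M : AddSubmonoid R) {d : ℕ} (hd : 2 ≤ d)
    (n : ℕ) :
    (esymmCost M (2 * d) n : ℝ) ≤
      (14 / 15 : ℝ) ^ ((d : ℝ) / 3) * n ^ d / d.factorial + n ^ (d - 1) * Real.logb 2 n := by
  set γ : ℝ := (14 / 15 : ℝ) ^ (1 / 3 : ℝ) with hγ
  have hγ_pow (k : ℕ) : γ ^ k = (14 / 15 : ℝ) ^ ((k : ℝ) / 3) := by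
    rw [hγ, ← Real.rpow_mul_natCast (by norm_num), one_div_mul_eq_div]
  have hγ_cube : γ ^ 3 = 14 / 15 := by
    rw [hγ_pow]
    norm_num
  have hγ_mem : γ ∈ Set.Icc (9 / 10) 1 := by
    have hγ0 : 0 ≤ γ := by positivity
    constructor
    · exact le_of_pow_le_pow_left₀ three_ne_zero hγ0 (by rw [hγ_cube]; norm_num)
    · exact (pow_le_one_iff_of_nonneg hγ0 three_ne_zero).1 (by rw [hγ_cube]; norm_num)
  rw [← hγ_pow]
  exact (isSplittingCost_esymmCost M hγ_cube).le_pow_add_logb hγ_mem hd n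

theorem f_even_upper_bound_general (m n : ℕ) (hm : 4 ≤ m) (hme : Even m) :
    (f m n : ℝ) ≤ ((14 : ℝ) / 15) ^ ((m : ℝ) / 6) * (n : ℝ) ^ (m / 2) / (Nat.factorial (m / 2))
      + (n : ℝ) ^ (m / 2 - 1) * Real.logb 2 n := by
  obtain ⟨d, rfl⟩ := even_iff_exists_two_mul.1 hme
  have hexponent : ((2 * d : ℕ) : ℝ) / 6 = (d : ℝ) / 3 := by
    push_cast
    ring
  rw [hexponent, Nat.mul_div_cancel_left d two_pos]
  calc (f (2 * d) n : ℝ) ≤ esymmCost linearForms (2 * d) n := mod_cast f_le_esymmCost (2 * d) n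
    _ ≤ _ := esymmCost_even_le linearForms (by omega) n

theorem f_even_upper_bound (m n : ℕ) (hm : 8 ≤ m) (hme : Even m) (hn : m ≤ n) :
    (f m n : ℝ) ≤ ((14 : ℝ) / 15) ^ ((m : ℝ) / 6) * (n : ℝ) ^ (m / 2) / (Nat.factorial (m / 2))
      + (n : ℝ) ^ (m / 2 - 1) * Real.logb 2 n :=
  f_even_upper_bound_general m n (by omega) hme
end

section
/- For every integer n ≥ 6, the quantity f_6(n) satisfies f_6(n) ≤ (14/15) · n³/3! + n² · log₂ n. -/
/-!
An upper bound for `f r n` is an identity: the number of `r`-subsets of `Y ∩ V`, as a function of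
`Y`, is a sum of few products of `r` linear forms `Y ↦ |Y ∩ A|` over pairwise disjoint sets `A`.

Sorting the `6`-sets by their fifth vertex gives `f 6 n ≤ ∑ v < n, f 4 v`. For the `4`-sets, halve
the vertex set: `4`-sets lying in one half are treated recursively, those meeting the halves in `3`
and `1` vertices cost only `O(n)`, and there remains the product of two complete graphs, on `a` and
`b` vertices. The products of two stars would need about `a b` blocks. But `K₄ × K₆` needs only `14`
blocks instead of `3 * 5 = 15`, and blowing up one vertex of each factor, which turns `K₄` and `K₆`
into complete multipartite graphs, propagates the saving to `14 a b / 15` blocks for all `a` and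
`b`. The halving then contributes `7 n² / 15` blocks to `f 4 n`, and summing over `n` yields the
leading term `7 n³ / 45`.
-/

open Finset Function

/-- The linear form `∑ a ∈ A, x a` evaluated at the indicator vector of the argument. -/
def hits (A : Finset ℕ) : Finset ℕ → ℕ := fun Y => #(Y ∩ A)

/-- The `r`-th elementary symmetric polynomial in the variables indexed by `V`, evaluated at the
indicator vector of the argument `Y`: the number of edges inside `Y` of the complete `r`-graph
on `V`. -/
def esymm (r : ℕ) (V : Finset ℕ) : Finset ℕ → ℕ := fun Y => (hits V Y).choose r

/-- The number of edges inside the argument of the complete multipartite graph with parts `p i`,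
when these are pairwise disjoint. -/
def crossPairs {m : ℕ} (p : Fin m → Finset ℕ) : Finset ℕ → ℕ :=
  ∑ i, ∑ j ∈ Ioi i, hits (p i) * hits (p j)

section hits

variable {A B : Finset ℕ}

lemma hits_biUnion {ι : Type*} {S : Finset ι} {p : ι → Finset ℕ}
    (hp : (S : Set ι).PairwiseDisjoint p) : hits (S.biUnion p) = ∑ i ∈ S, hits (p i) := by
  funext Y
  rw [Finset.sum_apply, hits, inter_biUnion, card_biUnion]
  · rfl
  · exact hp.mono fun _ => inter_subset_right

lemma hits_union (h : Disjoint A B) : hits (A ∪ B) = hits A + hits B := by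
  funext Y
  rw [Pi.add_apply, hits, inter_union_distrib_left, card_union_of_disjoint]
  · rfl
  · exact h.mono inter_subset_right inter_subset_right

lemma hits_le_card (A Y : Finset ℕ) : hits A Y ≤ #A :=
  card_le_card inter_subset_right

@[simp] lemma hits_empty : hits ∅ = 0 := by
  funext Y
  simp [hits]

lemma hits_eq_card_of_subset {V X : Finset ℕ} (h : X ⊆ V) : hits V X = #X := by
  rw [hits, inter_eq_left.2 h]

@[simp] lemma esymm_zero_s2 (V : Finset ℕ) : esymm 0 V = 1 := by
  funext Y
  simp [esymm]

@[simp] lemma esymm_one_s2 (V : Finset ℕ) : esymm 1 V = hits V := by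
  funext Y
  simp [esymm]

lemma esymm_eq_zero_of_card_lt_s2 {r : ℕ} {V : Finset ℕ} (h : #V < r) : esymm r V = 0 := by
  funext Y
  exact Nat.choose_eq_zero_of_lt ((hits_le_card V Y).trans_lt h)

@[simp] lemma esymm_succ_empty (r : ℕ) : esymm (r + 1) ∅ = 0 :=
  esymm_eq_zero_of_card_lt_s2 (by simp)

lemma esymm_union (r : ℕ) (h : Disjoint A B) :
    esymm r (A ∪ B) = ∑ ij ∈ antidiagonal r, esymm ij.1 A * esymm ij.2 B := by
  funext Y
  simp only [esymm, hits_union h, Pi.add_apply, Nat.add_choose_eq, Finset.sum_apply, Pi.mul_apply]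

lemma esymm_insert (r : ℕ) {x : ℕ} (hx : x ∉ A) :
    esymm (r + 1) (insert x A) = esymm (r + 1) A + hits {x} * esymm r A := by
  have hsingle (k : ℕ) : esymm (k + 2) {x} = 0 := esymm_eq_zero_of_card_lt_s2 (by simp)
  rw [insert_eq, esymm_union _ (by simpa using hx), Nat.antidiagonal_succ]
  cases r <;> simp [Nat.antidiagonal_succ, hsingle]

end hits

section crossPairs

variable {m : ℕ}

@[simp] lemma crossPairs_of_fin_zero (p : Fin 0 → Finset ℕ) : crossPairs p = 0 := rfl

lemma crossPairs_succ (p : Fin (m + 1) → Finset ℕ) :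
    crossPairs p = hits (p 0) * ∑ i, hits (Fin.tail p i) + crossPairs (Fin.tail p) := by
  simp only [crossPairs, Fin.sum_univ_succ, Fin.Ioi_zero_eq_map, Fin.Ioi_succ, sum_map,
    Fin.coe_succEmb, Fin.tail, mul_sum]

lemma crossPairs_fin_four (p : Fin 4 → Finset ℕ) :
    crossPairs p = hits (p 0) * (hits (p 1) + hits (p 2) + hits (p 3)) +
      hits (p 1) * (hits (p 2) + hits (p 3)) + hits (p 2) * hits (p 3) := by
  simp [crossPairs_succ, Fin.sum_univ_succ, Fin.tail, add_assoc]

lemma crossPairs_fin_six (q : Fin 6 → Finset ℕ) :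
    crossPairs q = hits (q 0) * (hits (q 1) + hits (q 2) + hits (q 3) + hits (q 4) + hits (q 5)) +
      hits (q 1) * (hits (q 2) + hits (q 3) + hits (q 4) + hits (q 5)) +
      hits (q 2) * (hits (q 3) + hits (q 4) + hits (q 5)) +
      hits (q 3) * (hits (q 4) + hits (q 5)) + hits (q 4) * hits (q 5) := by
  simp [crossPairs_succ, Fin.sum_univ_succ, Fin.tail, add_assoc]

/-- The parts are `m` single vertices and the remainder `R`. -/
lemma exists_crossPairs_add_esymm_two {B : Finset ℕ} (hm : m ≤ #B) :
    ∃ q : Fin (m + 1) → Finset ℕ, Pairwise (Disjoint on q) ∧ univ.biUnion q = B ∧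
      ∃ R ⊆ B, #R = #B - m ∧ esymm 2 B = crossPairs q + esymm 2 R := by
  induction m generalizing B with
  | zero => exact ⟨fun _ => B, fun i j hij => absurd (by lia) hij, by simp, B, Subset.rfl, rfl,
      by simp [crossPairs_succ]⟩
  | succ m ih =>
    obtain ⟨x, hx⟩ : B.Nonempty := card_pos.1 (by lia)
    obtain ⟨C, hxC, rfl⟩ : ∃ C, x ∉ C ∧ insert x C = B :=
      ⟨B.erase x, notMem_erase x B, insert_erase hx⟩
    rw [card_insert_of_notMem hxC] at hm ⊢
    obtain ⟨q, hq, rfl, R, hRC, hR, hsum⟩ := ih (B := C) (by lia)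
    refine ⟨Matrix.vecCons {x} q, ?_, ?_, R, hRC.trans (subset_insert _ _), by lia, ?_⟩
    · have hxq : ∀ i, x ∉ q i := by simpa using hxC
      intro i j hij
      cases i using Fin.cases <;> cases j using Fin.cases <;>
        simp_all [onFun, Pairwise]
    · ext y
      simp [Fin.exists_fin_succ]
    · rw [esymm_insert 1 hxC, esymm_one_s2, hits_biUnion (hq.set_pairwise _), crossPairs_succ, hsum]
      simp only [Matrix.vecCons, Fin.cons_zero, Fin.tail_cons]
      ring

end crossPairs

namespace Block

variable {V W : Finset ℕ} {r s : ℕ}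

/-- The number of edges of the block `B` contained in the argument. -/
def edgeCount (B : Block V r) : Finset ℕ → ℕ := ∏ i, hits (B.parts i)

lemma edgeCount_apply (B : Block V r) (Y : Finset ℕ) : B.edgeCount Y = ∏ i, #(Y ∩ B.parts i) := by
  simp [edgeCount, hits]

/-- The block with the same parts in a larger vertex set. -/
def mono (B : Block V r) (h : V ⊆ W) : Block W r where
  parts := B.parts
  nonempty := B.nonempty
  subset i := (B.subset i).trans h
  disj := B.disj

/-- The product of two blocks on disjoint vertex sets: its edges are the unions of an edge of `B`
and an edge of `C`. -/
def append (B : Block V r) (C : Block W s) (h : Disjoint V W) : Block (V ∪ W) (r + s) where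
  parts := Fin.append B.parts C.parts
  nonempty := Fin.addCases (by simpa using B.nonempty) (by simpa using C.nonempty)
  subset := Fin.addCases (fun i => by simpa using (B.subset i).trans subset_union_left)
    (fun i => by simpa using (C.subset i).trans subset_union_right)
  disj := by
    have hBC i j : Disjoint (B.parts i) (C.parts j) := h.mono (B.subset i) (C.subset j)
    refine Fin.addCases (fun i => ?_) (fun i => ?_) <;>
      refine Fin.addCases (fun j => ?_) (fun j => ?_) <;> intro hij
    · simpa using B.disj i j (by simpa using hij)
    · simpa using hBC i j
    · simpa using (hBC j i).symm
    · simpa using C.disj i j (by simpa using hij)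

lemma edgeCount_append (B : Block V r) (C : Block W s) (h : Disjoint V W) :
    (B.append C h).edgeCount = B.edgeCount * C.edgeCount := by
  simp [edgeCount, append, Fin.prod_univ_add]

lemma subset_of_mem_edges (B : Block V r) {X : Finset ℕ} (hX : X ∈ B.edges) : X ⊆ V := by
  intro x hx
  obtain ⟨i, hi⟩ := hX.2 x hx
  exact B.subset i hi

lemma sum_card_inter_parts (B : Block V r) (X : Finset ℕ) :
    ∑ i, #(X ∩ B.parts i) = #(X ∩ univ.biUnion B.parts) := by
  simpa [hits] using (congr_fun (hits_biUnion fun i _ j _ => B.disj i j) X).symm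

lemma card_of_mem_edges (B : Block V r) {X : Finset ℕ} (hX : X ∈ B.edges) : #X = r := by
  have hcover : X ∩ univ.biUnion B.parts = X :=
    inter_eq_left.2 fun x hx => by simpa using hX.2 x hx
  simpa [hX.1, hcover] using (B.sum_card_inter_parts X).symm

lemma mem_edges_iff_edgeCount_ne_zero (B : Block V r) {X : Finset ℕ} (hX : #X = r) :
    X ∈ B.edges ↔ B.edgeCount X ≠ 0 := by
  rw [edgeCount_apply, prod_ne_zero_iff]
  refine ⟨fun h i _ => by simp [h.1 i], fun h => ?_⟩
  have hone : ∀ i ∈ univ, 1 ≤ #(X ∩ B.parts i) := fun i hi => Nat.one_le_iff_ne_zero.2 (h i hi)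
  have hle : #(X ∩ univ.biUnion B.parts) ≤ #X := card_le_card inter_subset_left
  have hge : #X ≤ #(X ∩ univ.biUnion B.parts) := by
    simpa [hX, B.sum_card_inter_parts] using sum_le_sum hone
  have hsum : ∑ i : Fin r, 1 = ∑ i, #(X ∩ B.parts i) := by
    simp only [B.sum_card_inter_parts, sum_const, card_univ, Fintype.card_fin, smul_eq_mul]
    lia
  refine ⟨fun i => ((sum_eq_sum_iff_of_le hone).1 hsum i (mem_univ i)).symm, fun x hx => ?_⟩
  simpa using inter_eq_left.1 (eq_of_subset_of_card_le inter_subset_left hge) hx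

end Block

/-- `φ` counts, in every vertex set, the edges of at most `k` complete `r`-partite `r`-graphs on
`V`. For `φ = esymm r V` this says that at most `k` blocks partition the complete `r`-graph on `V`;
other functions `φ` stand for the multisets of edges met on the way. -/
def IsBlockSum (V : Finset ℕ) (r k : ℕ) (φ : Finset ℕ → ℕ) : Prop :=
  ∃ j ≤ k, ∃ B : Fin j → Block V r, ∑ i, (B i).edgeCount = φ

lemma exactCover_of_sum_edgeCount {V : Finset ℕ} {r k : ℕ} (B : Fin k → Block V r)
    (h : ∑ i, (B i).edgeCount = esymm r V) : ExactCover V r k {X | X ⊆ V ∧ #X = r} := by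
  have hone : ∀ X ⊆ V, #X = r → ∑ i, (B i).edgeCount X = 1 := fun X hXV hX => by
    simpa [esymm, hits_eq_card_of_subset hXV, hX] using congr_fun h X
  refine ⟨B, fun i j hij => Set.disjoint_left.2 fun X hi hj => ?_, ?_⟩
  · have hX := (B i).card_of_mem_edges hi
    have hsum := hone X ((B i).subset_of_mem_edges hi) hX
    have hle := add_le_sum (f := fun i => (B i).edgeCount X) (fun _ _ => Nat.zero_le _)
      (mem_univ i) (mem_univ j) hij
    rw [Block.mem_edges_iff_edgeCount_ne_zero _ hX] at hi hj
    lia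
  · ext X
    simp only [Set.mem_iUnion, Set.mem_ofPred_eq]
    constructor
    · rintro ⟨i, hi⟩
      exact ⟨(B i).subset_of_mem_edges hi, (B i).card_of_mem_edges hi⟩
    · rintro ⟨hXV, hX⟩
      obtain ⟨i, -, hi⟩ := exists_ne_zero_of_sum_ne_zero (hone X hXV hX ▸ one_ne_zero)
      exact ⟨i, ((B i).mem_edges_iff_edgeCount_ne_zero hX).2 hi⟩

lemma mul_clog_halves_add_le {n : ℕ} (hn : 2 ≤ n) :
    n / 2 * Nat.clog 2 (n / 2) + (n + 1) / 2 * Nat.clog 2 ((n + 1) / 2) + n ≤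
      n * Nat.clog 2 n := by
  have hclog : Nat.clog 2 n = Nat.clog 2 ((n + 1) / 2) + 1 := Nat.clog_of_two_le one_lt_two hn
  calc n / 2 * Nat.clog 2 (n / 2) + (n + 1) / 2 * Nat.clog 2 ((n + 1) / 2) + n
      ≤ n / 2 * Nat.clog 2 ((n + 1) / 2) + (n + 1) / 2 * Nat.clog 2 ((n + 1) / 2) + n := by
        gcongr
        lia
    _ = (n / 2 + (n + 1) / 2) * Nat.clog 2 ((n + 1) / 2) + n := by rw [add_mul]
    _ = n * Nat.clog 2 n := by rw [show n / 2 + (n + 1) / 2 = n by lia, hclog, mul_add_one]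

lemma sum_range_sq_add_mul_clog_le (n : ℕ) :
    90 * ∑ v ∈ range n, (7 * v ^ 2 / 15 + v * Nat.clog 2 v) ≤
      14 * n ^ 3 + 45 * n ^ 2 * Nat.clog 2 n := by
  induction n with
  | zero => simp
  | succ n ih =>
    have hclog : Nat.clog 2 n ≤ Nat.clog 2 (n + 1) := Nat.clog_mono_right 2 n.le_succ
    have hfloor : 90 * (7 * n ^ 2 / 15) ≤ 42 * n ^ 2 := by lia
    calc 90 * ∑ v ∈ range (n + 1), (7 * v ^ 2 / 15 + v * Nat.clog 2 v)
        = 90 * ∑ v ∈ range n, (7 * v ^ 2 / 15 + v * Nat.clog 2 v) +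
            (90 * (7 * n ^ 2 / 15) + 90 * n * Nat.clog 2 n) := by
          rw [sum_range_succ]
          ring
      _ ≤ 14 * n ^ 3 + 45 * n ^ 2 * Nat.clog 2 n + (42 * n ^ 2 + 90 * n * Nat.clog 2 n) := by
          gcongr
      _ = 14 * n ^ 3 + 42 * n ^ 2 + 45 * (n ^ 2 + 2 * n) * Nat.clog 2 n := by ring
      _ ≤ 14 * (n + 1) ^ 3 + 45 * (n + 1) ^ 2 * Nat.clog 2 (n + 1) := by
          gcongr ?_ + 45 * ?_ * ?_ <;> lia

lemma clog_two_le_two_mul_logb {n : ℕ} (hn : 2 ≤ n) :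
    (Nat.clog 2 n : ℝ) ≤ 2 * Real.logb 2 n := by
  have hone : 1 ≤ Real.logb 2 n := by
    rw [← Real.logb_self_eq_one one_lt_two]
    exact Real.logb_le_logb_of_le one_lt_two two_pos (mod_cast hn)
  have hceil : (Nat.clog 2 n : ℝ) < Real.logb 2 n + 1 := by
    rw [← Real.natCeil_logb_natCast]
    exact Nat.ceil_lt_add_one (zero_le_one.trans hone)
  linarith

namespace IsBlockSum

variable {V W A B : Finset ℕ} {r s k l m : ℕ} {φ ψ : Finset ℕ → ℕ}

lemma f_le {n : ℕ} (h : IsBlockSum (range n) r k (esymm r (range n))) : f r n ≤ k := by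
  obtain ⟨j, hj, B, hB⟩ := h
  exact (Nat.sInf_le (exactCover_of_sum_edgeCount B hB)).trans hj

lemma mono (h : IsBlockSum V r k φ) (hV : V ⊆ W) (hk : k ≤ l) : IsBlockSum W r l φ := by
  obtain ⟨j, hj, B, hB⟩ := h
  exact ⟨j, hj.trans hk, fun i => (B i).mono hV, hB⟩

lemma zero (V : Finset ℕ) (r : ℕ) : IsBlockSum V r 0 0 :=
  ⟨0, le_rfl, Fin.elim0, by simp⟩

lemma one (V : Finset ℕ) : IsBlockSum V 0 1 1 :=
  ⟨1, le_rfl, fun _ => ⟨Fin.elim0, nofun, nofun, nofun⟩, by simp [Block.edgeCount]⟩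

protected lemma hits (V : Finset ℕ) : IsBlockSum V 1 1 (hits V) := by
  rcases V.eq_empty_or_nonempty with rfl | hV
  · simpa using (zero ∅ 1).mono Subset.rfl zero_le_one
  · exact ⟨1, le_rfl, fun _ => ⟨fun _ => V, fun _ => hV, fun _ => Subset.rfl,
      fun i j hij => absurd (Subsingleton.elim i j) hij⟩, by simp [Block.edgeCount]⟩

lemma add (h : IsBlockSum V r k φ) (h' : IsBlockSum V r l ψ) :
    IsBlockSum V r (k + l) (φ + ψ) := by
  obtain ⟨i, hi, B, rfl⟩ := h
  obtain ⟨j, hj, C, rfl⟩ := h'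
  exact ⟨i + j, add_le_add hi hj, Fin.append B C, by simp [Fin.sum_univ_add]⟩

lemma sum {ι : Type*} {S : Finset ι} {c : ι → ℕ} {Φ : ι → Finset ℕ → ℕ}
    (h : ∀ i ∈ S, IsBlockSum V r (c i) (Φ i)) :
    IsBlockSum V r (∑ i ∈ S, c i) (∑ i ∈ S, Φ i) := by
  classical
  induction S using Finset.induction_on with
  | empty => simpa using zero V r
  | insert i S hi ih =>
    rw [sum_insert hi, sum_insert hi]
    exact (h i (mem_insert_self i S)).add (ih fun j hj => h j (mem_insert_of_mem hj))

lemma mul (h : IsBlockSum V r k φ) (h' : IsBlockSum W s l ψ) (hd : Disjoint V W) :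
    IsBlockSum (V ∪ W) (r + s) (k * l) (φ * ψ) := by
  obtain ⟨i, hi, B, rfl⟩ := h
  obtain ⟨j, hj, C, rfl⟩ := h'
  refine ⟨i * j, Nat.mul_le_mul hi hj,
    fun t => (B (finProdFinEquiv.symm t).1).append (C (finProdFinEquiv.symm t).2) hd, ?_⟩
  simp only [Block.edgeCount_append, sum_mul_sum]
  rw [← Fintype.sum_prod_type', ← Equiv.sum_comp finProdFinEquiv.symm]

lemma hits_mul_hits (hd : Disjoint A B) (hA : A ⊆ V) (hB : B ⊆ V) :
    IsBlockSum V 2 1 (hits A * hits B) :=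
  ((IsBlockSum.hits A).mul (IsBlockSum.hits B) hd).mono (union_subset hA hB) le_rfl

/-- Sort the `(r + 2)`-sets by their last vertex but one, the vertices of `W` being placed after
those of `U`. The set `W` is what makes the induction on `U` work. -/
lemma esymm_add_two_add_mul_hits {c : ℕ → ℕ}
    (hc : ∀ V : Finset ℕ, IsBlockSum V r (c #V) (esymm r V)) {U W : Finset ℕ}
    (hd : Disjoint U W) :
    IsBlockSum (U ∪ W) (r + 2) (∑ v ∈ range #U, c v)
      (esymm (r + 2) U + esymm (r + 1) U * hits W) := by
  induction U using Finset.induction_on generalizing W with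
  | empty => simpa using zero W (r + 2)
  | insert x U hx ih =>
    obtain ⟨hxW, hUW⟩ := disjoint_insert_left.1 hd
    have hlater := ih (W := insert x W) (disjoint_insert_right.2 ⟨hx, hUW⟩)
    have hfixed := ((hc U).mul (IsBlockSum.hits {x}) (disjoint_singleton_right.2 hx)).mul
      (IsBlockSum.hits W) (disjoint_union_left.2 ⟨hUW, disjoint_singleton_left.2 hxW⟩)
    rw [union_insert, ← insert_union] at hlater
    rw [union_comm U, ← insert_eq] at hfixed
    rw [card_insert_of_notMem hx, sum_range_succ]
    convert hlater.add hfixed using 1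
    · simp
    · rw [esymm_insert _ hx, esymm_insert _ hx, insert_eq x W,
        hits_union (disjoint_singleton_left.2 hxW)]
      ring

lemma esymm_add_two {c : ℕ → ℕ} (hc : ∀ V : Finset ℕ, IsBlockSum V r (c #V) (esymm r V))
    (V : Finset ℕ) : IsBlockSum V (r + 2) (∑ v ∈ range (#V - 1), c v) (esymm (r + 2) V) := by
  rcases V.eq_empty_or_nonempty with rfl | ⟨x, hx⟩
  · simpa using zero ∅ (r + 2)
  · have h := esymm_add_two_add_mul_hits hc (disjoint_singleton_right.2 (notMem_erase x V))
    rw [union_comm, ← insert_eq, card_erase_of_mem hx, mul_comm,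
      ← esymm_insert _ (notMem_erase x V), insert_erase hx] at h
    exact h

lemma esymm_two (V : Finset ℕ) : IsBlockSum V 2 (#V - 1) (esymm 2 V) := by
  simpa using esymm_add_two (c := fun _ => 1) (fun V => by simpa using one V) V

lemma esymm_three (V : Finset ℕ) : IsBlockSum V 3 (#V - 1) (esymm 3 V) := by
  simpa using esymm_add_two (c := fun _ => 1) (fun V => by simpa using IsBlockSum.hits V) V

lemma sum_hits_mul_sum_hits {ι : Type*} {p : ι → Finset ℕ} (hp : Pairwise (Disjoint on p))
    (hpV : ∀ i, p i ⊆ V) {S T : Finset ι} (hST : Disjoint S T) :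
    IsBlockSum V 2 1 ((∑ i ∈ S, hits (p i)) * ∑ j ∈ T, hits (p j)) := by
  rw [← hits_biUnion (hp.set_pairwise _), ← hits_biUnion (hp.set_pairwise _)]
  refine hits_mul_hits ?_ (biUnion_subset.2 fun i _ => hpV i) (biUnion_subset.2 fun j _ => hpV j)
  simp only [disjoint_biUnion_left, disjoint_biUnion_right]
  exact fun j hj i hi => hp fun hij => disjoint_left.1 hST hi (hij ▸ hj)

protected lemma crossPairs {p : Fin (m + 1) → Finset ℕ} (hp : Pairwise (Disjoint on p))
    (hpV : ∀ i, p i ⊆ V) : IsBlockSum V 2 m (crossPairs p) := by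
  have hstar (i : Fin m) :=
    sum_hits_mul_sum_hits hp hpV (S := {i.castSucc}) (T := Ioi i.castSucc) (by simp)
  simpa [crossPairs, Fin.sum_univ_castSucc, mul_sum, ← Fin.top_eq_last]
    using sum fun i (_ : i ∈ univ) => hstar i

/-- `M₀`, `M₁`, `M₂` are the perfect matchings of `K₄`; two of them form a `4`-cycle, which is
complete bipartite. -/
lemma exists_crossPairs_four {p : Fin 4 → Finset ℕ} (hp : Pairwise (Disjoint on p))
    (hpV : ∀ i, p i ⊆ V) :
    ∃ M₀ M₁ M₂ : Finset ℕ → ℕ, crossPairs p = M₀ + M₁ + M₂ ∧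
      (IsBlockSum V 2 2 M₀ ∧ IsBlockSum V 2 2 M₁ ∧ IsBlockSum V 2 2 M₂) ∧
      IsBlockSum V 2 1 (M₁ + M₂) ∧ IsBlockSum V 2 1 (M₀ + M₂) ∧ IsBlockSum V 2 1 (M₀ + M₁) := by
  have biclique (S T : Finset (Fin 4)) (h : Disjoint S T) := sum_hits_mul_sum_hits hp hpV h
  refine ⟨_, _, _, ?_,
    ⟨(biclique {0} {1} (by decide)).add (biclique {2} {3} (by decide)),
      (biclique {0} {2} (by decide)).add (biclique {1} {3} (by decide)),
      (biclique {0} {3} (by decide)).add (biclique {1} {2} (by decide))⟩, ?_, ?_, ?_⟩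
  · simp only [crossPairs_fin_four, sum_singleton]
    ring
  · convert biclique {0, 1} {2, 3} (by decide) using 1
    rw [sum_pair (by decide), sum_pair (by decide)]
    simp only [sum_singleton]
    ring
  · convert biclique {0, 2} {1, 3} (by decide) using 1
    rw [sum_pair (by decide), sum_pair (by decide)]
    simp only [sum_singleton]
    ring
  · convert biclique {0, 3} {1, 2} (by decide) using 1
    rw [sum_pair (by decide), sum_pair (by decide)]
    simp only [sum_singleton]
    ring

lemma exists_crossPairs_six {q : Fin 6 → Finset ℕ} (hq : Pairwise (Disjoint on q))
    (hqV : ∀ i, q i ⊆ V) :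
    ∃ X₀ X₁ X₂ Y₀ Y₁ Y₂ : Finset ℕ → ℕ,
      (crossPairs q = Y₀ + X₁ + X₂ ∧ crossPairs q = X₀ + Y₁ + X₂ ∧ crossPairs q = X₀ + X₁ + Y₂) ∧
      (IsBlockSum V 2 2 X₀ ∧ IsBlockSum V 2 2 X₁ ∧ IsBlockSum V 2 2 X₂) ∧
      IsBlockSum V 2 1 Y₀ ∧ IsBlockSum V 2 1 Y₁ ∧ IsBlockSum V 2 2 Y₂ := by
  have biclique (S T : Finset (Fin 6)) (h : Disjoint S T) := sum_hits_mul_sum_hits hq hqV h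
  refine ⟨_, _, _, _, _, _, ?_,
    ⟨(biclique {1} {2, 4} (by decide)).add (biclique {0} {2, 3} (by decide)),
      (biclique {3, 5} {4} (by decide)).add (biclique {0, 5} {1} (by decide)),
      (biclique {2} {3, 4, 5} (by decide)).add (biclique {0, 3} {5} (by decide))⟩,
    biclique {0, 1} {2, 3, 4} (by decide), biclique {0, 3, 5} {1, 4} (by decide),
    (biclique {0, 2} {4, 5} (by decide)).add (biclique {1, 2, 5} {3} (by decide))⟩
  simp only [crossPairs_fin_six, sum_insert, sum_singleton, mem_insert, mem_singleton,
    Fin.reduceEq, or_self, not_false_eq_true]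
  refine ⟨?_, ?_, ?_⟩ <;> ring

lemma crossPairs_four_mul_crossPairs_six {p : Fin 4 → Finset ℕ} {q : Fin 6 → Finset ℕ}
    (hp : Pairwise (Disjoint on p)) (hpV : ∀ i, p i ⊆ V) (hq : Pairwise (Disjoint on q))
    (hqW : ∀ i, q i ⊆ W) (hd : Disjoint V W) :
    IsBlockSum (V ∪ W) 4 14 (crossPairs p * crossPairs q) := by
  obtain ⟨M₀, M₁, M₂, hM, ⟨hM₀, hM₁, hM₂⟩, hC₀, hC₁, hC₂⟩ := exists_crossPairs_four hp hpV
  obtain ⟨X₀, X₁, X₂, Y₀, Y₁, Y₂, ⟨h₀, h₁, h₂⟩, ⟨hX₀, hX₁, hX₂⟩, hY₀, hY₁, hY₂⟩ :=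
    exists_crossPairs_six hq hqW
  -- Each matching `Mᵢ` gets its own decomposition of `K₆`; grouping by `Xᵢ` pairs it with a
  -- `4`-cycle. The cost is `3 * (1 * 2)` for the terms with `Xᵢ` and `2 * 1 + 2 * 1 + 2 * 2` for
  -- those with `Yᵢ`.
  have hsum : crossPairs p * crossPairs q =
      (M₁ + M₂) * X₀ + (M₀ + M₂) * X₁ + (M₀ + M₁) * X₂ + M₀ * Y₀ + M₁ * Y₁ + M₂ * Y₂ :=
    calc crossPairs p * crossPairs q
        = M₀ * crossPairs q + M₁ * crossPairs q + M₂ * crossPairs q := by rw [hM]; ring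
      _ = M₀ * (Y₀ + X₁ + X₂) + M₁ * (X₀ + Y₁ + X₂) + M₂ * (X₀ + X₁ + Y₂) := by
        rw [← h₀, ← h₁, ← h₂]
      _ = _ := by ring
  rw [hsum]
  exact (((((hC₀.mul hX₀ hd).add (hC₁.mul hX₁ hd)).add (hC₂.mul hX₂ hd)).add
    (hM₀.mul hY₀ hd)).add (hM₁.mul hY₁ hd)).add (hM₂.mul hY₂ hd)

lemma crossPairs_four_mul_esymm_two {p : Fin 4 → Finset ℕ} (hp : Pairwise (Disjoint on p))
    (hpV : ∀ i, p i ⊆ V) (hd : Disjoint V B) :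
    IsBlockSum (V ∪ B) 4 (14 * #B / 5) (crossPairs p * esymm 2 B) := by
  induction B using Finset.strongInduction with
  | H B ih =>
    rcases lt_or_ge #B 6 with hB | hB
    · exact ((IsBlockSum.crossPairs hp hpV).mul (esymm_two B) hd).mono Subset.rfl (by lia)
    · obtain ⟨q, hq, hqB, R, hRB, hR, hsum⟩ :=
        exists_crossPairs_add_esymm_two (show 5 ≤ #B by lia)
      have hproper : R ⊂ B := hRB.ssubset_of_ne (by rintro rfl; lia)
      have hqV (i : Fin 6) : q i ⊆ B := hqB ▸ subset_biUnion_of_mem q (mem_univ i)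
      have hrest := (ih R hproper (hd.mono_right hRB)).mono (union_subset_union_right hRB) le_rfl
      rw [hsum, mul_add]
      exact ((crossPairs_four_mul_crossPairs_six hp hpV hq hqV hd).add hrest).mono Subset.rfl
        (by lia)

lemma esymm_two_mul_esymm_two (hd : Disjoint A B) :
    IsBlockSum (A ∪ B) 4 (14 * (#A * #B) / 15) (esymm 2 A * esymm 2 B) := by
  induction A using Finset.strongInduction with
  | H A ih =>
    rcases lt_or_ge #A 4 with hA | hA
    · refine ((esymm_two A).mul (esymm_two B) hd).mono Subset.rfl ?_
      interval_cases #A <;> lia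
    · obtain ⟨p, hp, hpA, R, hRA, hR, hsum⟩ :=
        exists_crossPairs_add_esymm_two (show 3 ≤ #A by lia)
      have hproper : R ⊂ A := hRA.ssubset_of_ne (by rintro rfl; lia)
      have hpV (i : Fin 4) : p i ⊆ A := hpA ▸ subset_biUnion_of_mem p (mem_univ i)
      have hrest := (ih R hproper (hd.mono_left hRA)).mono (union_subset_union_left hRA) le_rfl
      rw [hsum, add_mul]
      refine ((crossPairs_four_mul_esymm_two hp hpV hd).add hrest).mono Subset.rfl ?_
      obtain ⟨a, ha⟩ := Nat.exists_eq_add_of_le' hA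
      rw [hR, ha, show a + 4 - 3 = a + 1 by lia]
      lia

lemma esymm_four_union (hd : Disjoint A B) (hA : IsBlockSum A 4 k (esymm 4 A))
    (hB : IsBlockSum B 4 l (esymm 4 B)) :
    IsBlockSum (A ∪ B) 4 (k + l + #A + #B + 14 * (#A * #B) / 15) (esymm 4 (A ∪ B)) := by
  have h := ((((hA.mono (subset_union_left (s₂ := B)) le_rfl).add
    (hB.mono (subset_union_right (s₁ := A)) le_rfl)).add
    ((esymm_three A).mul (IsBlockSum.hits B) hd)).add
    ((IsBlockSum.hits A).mul (esymm_three B) hd)).add (esymm_two_mul_esymm_two hd)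
  convert h.mono Subset.rfl _ using 1
  · simp only [esymm_union 4 hd, Nat.sum_antidiagonal_eq_sum_range_succ_mk, sum_range_succ,
      range_zero, sum_empty, Nat.reduceSub, esymm_zero_s2, esymm_one_s2]
    ring
  · lia

lemma esymm_four (V : Finset ℕ) :
    IsBlockSum V 4 (7 * #V ^ 2 / 15 + #V * Nat.clog 2 #V) (esymm 4 V) := by
  induction V using Finset.strongInduction with
  | H V ih =>
    rcases lt_or_ge #V 2 with hV | hV
    · rw [esymm_eq_zero_of_card_lt_s2 (by lia)]
      exact (zero V 4).mono Subset.rfl (Nat.zero_le _)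
    · obtain ⟨A, hAV, hA⟩ := exists_subset_card_eq (s := V) (n := #V / 2) (by lia)
      have hB : #(V \ A) = (#V + 1) / 2 := by
        rw [card_sdiff_of_subset hAV]
        lia
      have hAih := ih A (hAV.ssubset_of_ne (by rintro rfl; lia))
      have hBih := ih (V \ A) (sdiff_subset.ssubset_of_ne fun h => by rw [h] at hB; lia)
      have h := esymm_four_union disjoint_sdiff hAih hBih
      rw [union_sdiff_of_subset hAV] at h
      refine h.mono Subset.rfl ?_
      rw [hA, hB]
      have hlog := mul_clog_halves_add_le hV
      have hsquare : 7 * #V ^ 2 =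
          7 * (#V / 2) ^ 2 + 7 * ((#V + 1) / 2) ^ 2 + 14 * (#V / 2 * ((#V + 1) / 2)) := by
        conv_lhs => rw [show #V = #V / 2 + (#V + 1) / 2 by lia]
        ring
      lia

end IsBlockSum

lemma f_six_le_sum (n : ℕ) : f 6 n ≤ ∑ v ∈ range n, (7 * v ^ 2 / 15 + v * Nat.clog 2 v) := by
  have h := (IsBlockSum.esymm_add_two (c := fun v => 7 * v ^ 2 / 15 + v * Nat.clog 2 v)
    IsBlockSum.esymm_four (range n)).f_le
  rw [card_range] at h
  exact h.trans (sum_le_sum_of_subset (range_subset_range.2 (n.sub_le 1)))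

theorem f_six_upper_bound (n : ℕ) (hn : 6 ≤ n) :
    (f 6 n : ℝ) ≤ (14 / 15 : ℝ) * (n : ℝ) ^ 3 / (Nat.factorial 3) + (n : ℝ) ^ 2 * Real.logb 2 n := by
  have hclog := clog_two_le_two_mul_logb (n := n) (by lia)
  have hf : 90 * f 6 n ≤ 14 * n ^ 3 + 45 * n ^ 2 * Nat.clog 2 n :=
    (Nat.mul_le_mul_left 90 (f_six_le_sum n)).trans (sum_range_sq_add_mul_clog_le n)
  calc (f 6 n : ℝ) ≤ (14 * n ^ 3 + 45 * n ^ 2 * Nat.clog 2 n) / 90 := by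
        rw [le_div_iff₀' (by norm_num)]
        exact_mod_cast hf
    _ ≤ (14 * n ^ 3 + 45 * n ^ 2 * (2 * Real.logb 2 n)) / 90 := by gcongr
    _ = 14 / 15 * n ^ 3 / (Nat.factorial 3) + n ^ 2 * Real.logb 2 n := by
        simp only [Nat.factorial]
        push_cast
        ring
end
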